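/- Let T be a computable real number with 0 < T ≤ 1. Then the series Z(T) = ∑_{p ∈ dom U} 2^{−|p|/T} converges to a positive real number, and the free energy F(T) = −T·log₂ Z(T) is a right-computable real number which is weakly Chaitin T-random and T-compressible. -/

import Mathlib

open Filter

/-- A set of finite binary strings is prefix-free if no element of it is a
prefix of another (distinct) element of it. -/
def PrefixFree (S : Set (List Bool)) : Prop :=
  ∀ p ∈ S, ∀ q ∈ S, p <+: q → p = q

/-- A computer: a partial recursive function from finite binary strings to
finite binary strings whose domain is a prefix-free set. -/
structure Computer where
  f : List Bool →. List Bool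
  partrec : Partrec f
  prefixFree : PrefixFree {p | (f p).Dom}

/-- The domain of a computer. -/
def Computer.domain (C : Computer) : Set (List Bool) := {p | (C.f p).Dom}

/-- A computer `U` is optimal if every computer can be simulated on `U` with
only a constant increase in program length. -/
def IsOptimal (U : Computer) : Prop :=
  ∀ C : Computer, ∃ d : ℕ, ∀ p : List Bool, (C.f p).Dom →
    ∃ p' : List Bool, p'.length ≤ p.length + d ∧ ∀ s, s ∈ C.f p → s ∈ U.f p'

/-- Program-size complexity `H(s)`: the minimal length of a program `p`
with `U(p) = s`. -/
noncomputable def H (U : Computer) (s : List Bool) : ℕ :=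
  sInf {n | ∃ p : List Bool, p.length = n ∧ s ∈ U.f p}

/-- The `n`-th bit (`n ≥ 1`) of the base-two expansion of `x mod 1`
(the expansion chosen with infinitely many zeros). -/
noncomputable def binDigit (x : ℝ) (n : ℕ) : Bool :=
  decide (⌊Int.fract x * 2 ^ n⌋ % 2 = 1)

/-- The first `n` bits of the base-two expansion of `x mod 1` (with
infinitely many zeros). -/
noncomputable def bits (x : ℝ) (n : ℕ) : List Bool :=
  (List.range n).map fun i => binDigit x (i + 1)

/-- A real `x` is weakly Chaitin `D`-random (w.r.t. the computer `U`). -/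
def WeaklyChaitinRandom (U : Computer) (D x : ℝ) : Prop :=
  ∃ c : ℝ, ∀ n : ℕ, 1 ≤ n → D * n - c ≤ (H U (bits x n) : ℝ)

/-- A real `x` is Chaitin `D`-random (w.r.t. the computer `U`). -/
def ChaitinRandom (U : Computer) (D x : ℝ) : Prop :=
  Tendsto (fun n : ℕ => (H U (bits x n) : ℝ) - D * n) atTop atTop

/-- A real `x` is `D`-compressible (w.r.t. the computer `U`). -/
def DCompressible (U : Computer) (D x : ℝ) : Prop :=
  Filter.limsup (fun n : ℕ => (H U (bits x n) : ℝ) / n) atTop ≤ D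

/-- A computable real number. -/
def ComputableReal (T : ℝ) : Prop :=
  ∃ f : ℕ → ℚ, Computable f ∧ ∀ n : ℕ, 1 ≤ n → |T - (f n : ℝ)| < 1 / n

/-- A right-computable real number. -/
def RightComputable (T : ℝ) : Prop :=
  ∃ g : ℕ → ℚ, Computable g ∧ (∀ n, T ≤ (g n : ℝ)) ∧
    Tendsto (fun n => ((g n : ℚ) : ℝ)) atTop (nhds T)

/-- A left-computable real number. -/
def LeftComputable (T : ℝ) : Prop := RightComputable (-T)

/-- The term `2 ^ (-|p| / T)` of the partition function `Z(T)`. -/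
noncomputable def zterm (U : Computer) (T : ℝ) (p : U.domain) : ℝ :=
  (2 : ℝ) ^ (-((p : List Bool).length : ℝ) / T)

/-- The term `|p| ^ Q * 2 ^ (-|p| / T)` of `W(Q,T)`. -/
noncomputable def wterm (U : Computer) (Q T : ℝ) (p : U.domain) : ℝ :=
  ((p : List Bool).length : ℝ) ^ Q * (2 : ℝ) ^ (-((p : List Bool).length : ℝ) / T)

/-- The term `|p| * 2 ^ (-|p| / T)` of `W(1,T)`. -/
noncomputable def wlterm (U : Computer) (T : ℝ) (p : U.domain) : ℝ :=
  ((p : List Bool).length : ℝ) * (2 : ℝ) ^ (-((p : List Bool).length : ℝ) / T)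

/-- The term `|p| ^ 2 * 2 ^ (-|p| / T)` of `W(2,T)`. -/
noncomputable def wsqterm (U : Computer) (T : ℝ) (p : U.domain) : ℝ :=
  ((p : List Bool).length : ℝ) ^ 2 * (2 : ℝ) ^ (-((p : List Bool).length : ℝ) / T)

/-- A lower-computable function `f : ℕ⁺ → [0,∞)` (represented on `ℕ`,
with all conditions imposed on positive arguments). -/
def LowerComputableFun (f : ℕ → ℝ) : Prop :=
  ∃ a : ℕ → ℕ → ℚ, Computable₂ a ∧
    (∀ k n : ℕ, 1 ≤ k → 1 ≤ n → (a k n : ℝ) ≤ f n) ∧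
    (∀ n : ℕ, 1 ≤ n → Tendsto (fun k => ((a k n : ℚ) : ℝ)) atTop (nhds (f n)))

/-- A lower-computable semi-measure on finite binary strings. -/
def LowerComputableSemiMeasure (r : List Bool → ℝ) : Prop :=
  (∀ s, 0 ≤ r s) ∧ (∀ s, r s ≤ 1) ∧ Summable r ∧ (∑' s, r s) ≤ 1 ∧
    ∃ f : ℕ → List Bool → ℚ, Computable₂ f ∧
      (∀ n s, ((f n s : ℚ) : ℝ) ≤ r s) ∧
      (∀ s, Tendsto (fun n => ((f n s : ℚ) : ℝ)) atTop (nhds (r s)))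

/-- A universal probability. -/
def UniversalProbability (m : List Bool → ℝ) : Prop :=
  LowerComputableSemiMeasure m ∧
    ∀ r : List Bool → ℝ, LowerComputableSemiMeasure r →
      ∃ c : ℝ, 0 < c ∧ ∀ s, c * r s ≤ m s



noncomputable def ratRaw (q : ℚ) : ℕ := @Encodable.encode ℚ Rat.instEncodable q

theorem ratRaw_eq (q : ℚ) : ratRaw q = Nat.pair (Encodable.encode q.num) q.den := rfl

theorem ratRaw_inj : Function.Injective ratRaw := @Encodable.encode_injective ℚ Rat.instEncodable

def ratRng : Set ℕ := Set.range ratRaw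

theorem ratSeq_exists : ∃ ρ : ℕ → ℕ, (∀ n, ρ n = ratRaw (Denumerable.ofNat ℚ n)) ∧
    (∀ n, ρ n < ρ (n+1)) ∧ (∀ n, ∀ x ∈ ratRng, ρ n < x → ρ (n+1) ≤ x) := by
  classical
  let i1 := @Encodable.decidableRangeEncode ℚ Rat.instEncodable
  let i2 : Infinite (Set.range (@Encodable.encode ℚ Rat.instEncodable)) :=
    Infinite.of_injective _ (Equiv.ofInjective _ (@Encodable.encode_injective ℚ Rat.instEncodable)).injective
  refine ⟨fun n => (Nat.Subtype.ofNat (Set.range (@Encodable.encode ℚ Rat.instEncodable)) n : ℕ), ?_, ?_, ?_⟩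
  · intro n
    have h : Denumerable.ofNat ℚ n = (@Encodable.equivRangeEncode ℚ Rat.instEncodable).symm 
      (Nat.Subtype.ofNat (Set.range (@Encodable.encode ℚ Rat.instEncodable)) n) := by
      rfl
    rw [h]
    have := congrArg Subtype.val ((@Encodable.equivRangeEncode ℚ Rat.instEncodable).apply_symm_apply (Nat.Subtype.ofNat (Set.range (@Encodable.encode ℚ Rat.instEncodable)) n))
    exact this.symm
  · intro n
    exact Nat.Subtype.lt_succ_self _
  · intro n x hx h
    have : Nat.Subtype.ofNat (Set.range (@Encodable.encode ℚ Rat.instEncodable)) n < ⟨x, hx⟩ := h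
    exact Nat.Subtype.succ_le_of_lt this

/-- decode an integer code -/
theorem int_code (z : ℤ) : Encodable.encode z = Equiv.intEquivNat z := rfl

theorem int_code_natAbs (z : ℤ) : z.natAbs = (Encodable.encode z + 1) / 2 := by
  rw [int_code]
  cases z with
  | ofNat n => change n = (2 * n + 1)/2; omega
  | negSucc n => change n + 1 = (2 * n + 1 + 1)/2; omega

theorem int_code_toNat (z : ℤ) : z.toNat = if Encodable.encode z % 2 = 0 then Encodable.encode z / 2 else 0 := by
  rw [int_code]
  cases z with
  | ofNat n => change n = if (2 * n) % 2 = 0 then (2*n)/2 else 0; simp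
  | negSucc n => change 0 = if (2 * n + 1) % 2 = 0 then _ else 0; rw [if_neg]; omega

theorem mem_ratRng (x : ℕ) : x ∈ ratRng ↔ (0 < x.unpair.2 ∧ ∀ k < x.unpair.2 + 1, (x.unpair.1 + 1) / 2 % k = 0 → x.unpair.2 % k = 0 → k = 1) := by
  have key : ∀ a d : ℕ, 0 < d → ((∀ k < d + 1, a % k = 0 → d % k = 0 → k = 1) ↔ a.Coprime d) := by
    intro a d hd
    constructor
    · intro h
      exact h _ (Nat.lt_succ_of_le (Nat.gcd_le_right _ hd)) (Nat.mod_eq_zero_of_dvd (Nat.gcd_dvd_left _ _)) (Nat.mod_eq_zero_of_dvd (Nat.gcd_dvd_right _ _))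
    · intro h k _ h1 h2
      exact Nat.eq_one_of_dvd_coprimes h (Nat.dvd_of_mod_eq_zero h1) (Nat.dvd_of_mod_eq_zero h2)
  constructor
  · rintro ⟨q, rfl⟩
    rw [ratRaw_eq]
    simp only [Nat.unpair_pair]
    refine ⟨q.pos, ?_⟩
    rw [key _ _ q.pos, ← int_code_natAbs]
    exact q.reduced
  · rintro ⟨h1, h2⟩
    rw [key _ _ h1] at h2
    obtain ⟨z, hz⟩ : ∃ z : ℤ, Encodable.encode z = x.unpair.1 := Equiv.intEquivNat.surjective _
    rw [← hz, ← int_code_natAbs] at h2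
    refine ⟨⟨z, x.unpair.2, h1.ne', h2⟩, ?_⟩
    rw [ratRaw_eq]
    simp [hz]

theorem ratRng_prim : PrimrecPred (fun x => x ∈ ratRng) := by
  have hR : PrimrecRel (fun (k : ℕ) (y : ℕ × ℕ) => y.1 % k = 0 → y.2 % k = 0 → k = 1) := by
    have e1 : PrimrecPred (fun p : ℕ × (ℕ × ℕ) => p.2.1 % p.1 = 0) :=
      Primrec.eq.comp (Primrec.nat_mod.comp (Primrec.fst.comp Primrec.snd) Primrec.fst) (Primrec.const 0)
    have e2 : PrimrecPred (fun p : ℕ × (ℕ × ℕ) => p.2.2 % p.1 = 0) :=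
      Primrec.eq.comp (Primrec.nat_mod.comp (Primrec.snd.comp Primrec.snd) Primrec.fst) (Primrec.const 0)
    have e3 : PrimrecPred (fun p : ℕ × (ℕ × ℕ) => p.1 = 1) :=
      Primrec.eq.comp Primrec.fst (Primrec.const 1)
    have := (e1.not.or (e2.not.or e3))
    exact this.of_eq (fun p => by tauto)
  have h2' := PrimrecRel.forall_mem_list hR
  have h2 : PrimrecRel (fun (n : ℕ) (y : ℕ × ℕ) => ∀ k < n, y.1 % k = 0 → y.2 % k = 0 → k = 1) :=
    (h2'.comp (Primrec.list_range.comp Primrec.fst) Primrec.snd).of_eq (fun p => by simp)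
  have u1 : Primrec (fun x : ℕ => x.unpair.1) := Primrec.fst.comp Primrec.unpair
  have u2 : Primrec (fun x : ℕ => x.unpair.2) := Primrec.snd.comp Primrec.unpair
  have h3 : PrimrecPred (fun x : ℕ => ∀ k < x.unpair.2 + 1, (x.unpair.1 + 1) / 2 % k = 0 → x.unpair.2 % k = 0 → k = 1) :=
    h2.comp (Primrec.succ.comp u2) ((Primrec.nat_div.comp (Primrec.succ.comp u1) (Primrec.const 2)).pair u2)
  have h4 : PrimrecPred (fun x : ℕ => 0 < x.unpair.2) := Primrec.nat_lt.comp (Primrec.const 0) u2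
  exact (h4.and h3).of_eq (fun x => (mem_ratRng x).symm)

theorem ratRaw_comp : Computable ratRaw := by
  obtain ⟨ρ, h1, h2, h3⟩ := ratSeq_exists
  have hρ : Computable ρ := by
    classical
    have hm : ∀ n, ρ n ∈ ratRng := fun n => by rw [h1]; exact ⟨_, rfl⟩
    have hex : ∀ y : ℕ, ∃ x, x ∈ ratRng ∧ y < x := by
      intro y
      have hs : StrictMono ρ := strictMono_nat_of_lt_succ h2
      exact ⟨ρ (y+1), hm _, lt_of_lt_of_le (Nat.lt_succ_self y) (hs.le_apply)⟩
    have hstep : Computable (fun y : ℕ => Nat.find (hex y)) := by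
      have hp : PrimrecPred (fun p : ℕ × ℕ => p.2 ∈ ratRng ∧ p.1 < p.2) := 
        (ratRng_prim.comp Primrec.snd).and (Primrec.nat_lt.comp Primrec.fst Primrec.snd)
      exact Computable.find (P := fun y x => x ∈ ratRng ∧ y < x) hp.computablePred hex
    have : Computable (fun n : ℕ => Nat.rec (motive := fun _ => ℕ) (ρ 0) (fun _ y => Nat.find (hex y)) n) := 
      Computable.nat_rec Computable.id (Computable.const _) (hstep.comp (Computable.snd.comp Computable.snd)).to₂
    refine this.of_eq (fun n => ?_)
    induction n with
    | zero => rfl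
    | succ n ih =>
      change Nat.find (hex (Nat.rec (motive := fun _ => ℕ) (ρ 0) (fun _ y => Nat.find (hex y)) n)) = _
      simp only [ih]
      refine (Nat.find_eq_iff _).2 ⟨⟨hm _, h2 n⟩, ?_⟩
      rintro x hx ⟨hx1, hx2⟩
      exact absurd (h3 n x hx1 hx2) (not_le.2 hx)
  have : Computable (fun q : ℚ => ρ (@Encodable.encode ℚ Primcodable.toEncodable q)) := hρ.comp Computable.encode
  refine this.of_eq (fun q => ?_)
  rw [h1]
  exact congrArg ratRaw (Denumerable.ofNat_encode q)

theorem rat_den_comp : Computable (fun q : ℚ => q.den) := by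
  have u2 : Primrec (fun x : ℕ => x.unpair.2) := Primrec.snd.comp Primrec.unpair
  refine (u2.to_comp.comp ratRaw_comp).of_eq (fun q => ?_)
  simp [ratRaw_eq]

theorem rat_num_comp : Computable (fun q : ℚ => q.num.toNat) := by
  have u1 : Primrec (fun x : ℕ => x.unpair.1) := Primrec.fst.comp Primrec.unpair
  have : Primrec (fun x : ℕ => if x.unpair.1 % 2 = 0 then x.unpair.1 / 2 else 0) :=
    Primrec.ite (Primrec.eq.comp (Primrec.nat_mod.comp u1 (Primrec.const 2)) (Primrec.const 0))
      (Primrec.nat_div.comp u1 (Primrec.const 2)) (Primrec.const 0)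
  refine (this.to_comp.comp ratRaw_comp).of_eq (fun q => ?_)
  simp only [ratRaw_eq, Nat.unpair_pair]
  rw [int_code_toNat]

theorem rat_mk_comp : Computable (fun p : ℕ × ℕ => (((p.1 + 1 : ℕ) : ℚ) / ((p.2 + 1 : ℕ) : ℚ))) := by
  classical
  have hspec : ∀ (p : ℕ × ℕ) (q : ℚ), q.num.toNat * (p.2+1) = (p.1+1) * q.den ↔ q = (((p.1 + 1 : ℕ) : ℚ) / ((p.2 + 1 : ℕ) : ℚ)) := by
    intro p q
    rw [eq_div_iff (by positivity)]
    have hd : (q.den : ℚ) ≠ 0 := by exact_mod_cast q.den_nz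
    constructor
    · intro h
      have hpos : 0 < q.num.toNat := by
        rcases Nat.eq_zero_or_pos q.num.toNat with h0 | h0
        · rw [h0, zero_mul] at h
          exact absurd h.symm (Nat.mul_ne_zero (Nat.succ_ne_zero _) q.den_nz)
        · exact h0
      have h2 : ((q.num.toNat : ℤ)) = q.num := Int.toNat_of_nonneg (by omega)
      have h3 : (q.num : ℚ) * (p.2 + 1 : ℕ) = (p.1+1 : ℕ) * q.den := by
        rw [← h2]; exact_mod_cast h
      have h4 : q * q.den = q.num := Rat.mul_den_eq_num q
      apply mul_right_cancel₀ hd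
      rw [← h3, ← h4]; ring
    · intro h
      have hq : 0 ≤ q := by
        rw [← eq_div_iff (by positivity)] at h; rw [h]; positivity
      have h2 : ((q.num.toNat : ℤ)) = q.num := Int.toNat_of_nonneg (Rat.num_nonneg.2 hq)
      have h4 : q * q.den = q.num := Rat.mul_den_eq_num q
      have h5 : ((q.num.toNat : ℕ) : ℚ) = q.num := by exact_mod_cast h2
      have : ((q.num.toNat * (p.2+1) : ℕ) : ℚ) = ((p.1+1) * q.den : ℕ) := by
        push_cast
        push_cast at h
        rw [h5, ← h4, ← h]; ring
      exact_mod_cast this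
  have hex : ∀ p : ℕ × ℕ, ∃ x : ℕ, (Denumerable.ofNat ℚ x).num.toNat * (p.2+1) = (p.1+1) * (Denumerable.ofNat ℚ x).den := by
    intro p
    refine ⟨@Encodable.encode ℚ Primcodable.toEncodable (((p.1 + 1 : ℕ) : ℚ) / ((p.2 + 1 : ℕ) : ℚ)), ?_⟩
    rw [hspec]
    exact Denumerable.ofNat_encode _
  have hof : Computable (Denumerable.ofNat ℚ) := Computable.ofNat ℚ
  have hp : ComputablePred (fun a : (ℕ × ℕ) × ℕ => (Denumerable.ofNat ℚ a.2).num.toNat * (a.1.2+1) = (a.1.1+1) * (Denumerable.ofNat ℚ a.2).den) := by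
    refine Computable.computablePred ?_
    have e : Computable₂ (fun a b : ℕ => decide (a = b)) := (Primrec.eq.decide).to_comp
    refine e.comp (Primrec.nat_mul.to_comp.comp (rat_num_comp.comp (hof.comp Computable.snd)) (Computable.succ.comp (Computable.snd.comp Computable.fst))) (Primrec.nat_mul.to_comp.comp (Computable.succ.comp (Computable.fst.comp Computable.fst)) (rat_den_comp.comp (hof.comp Computable.snd)))
  have := hof.comp (Computable.find hp hex)
  refine this.of_eq (fun p => ?_)
  exact (hspec p _).1 (Nat.find_spec (hex p))


theorem prim_pow : Primrec₂ (fun a b : ℕ => a ^ b) := Primrec₂.unpaired'.1 Nat.Primrec.pow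

/-- computable two-sided integer approximations of `v * T` -/
theorem tfun_exists (T : ℝ) (hT0 : 0 < T) (f : ℕ → ℚ) (hf : Computable f)
    (hfT : ∀ n : ℕ, 1 ≤ n → |T - (f n : ℝ)| < 1 / n) :
    ∃ t : ℕ → ℕ, Computable t ∧ ∀ v : ℕ, 1 ≤ v → (t v : ℝ) < v * T ∧ (v : ℝ) * T < t v + 3 := by
  refine ⟨fun v => v * (f v).num.toNat / (f v).den - 1, ?_, ?_⟩
  · exact Primrec.nat_sub.to_comp.comp (Primrec.nat_div.to_comp.comp (Primrec.nat_mul.to_comp.comp Computable.id (rat_num_comp.comp hf)) (rat_den_comp.comp hf)) (Computable.const 1)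
  · intro v hv
    beta_reduce
    have hv' : (0:ℝ) < v := by exact_mod_cast hv
    have h := hfT v hv
    rw [lt_div_iff₀ hv', ← abs_of_pos hv', ← abs_mul, abs_lt] at h
    obtain ⟨h1, h2⟩ := h
    have hd : (0:ℝ) < (f v).den := by exact_mod_cast (f v).pos
    have hfe : ((f v : ℚ) : ℝ) = (f v).num / (f v).den := by exact_mod_cast (Rat.num_div_den (f v)).symm
    have hvT : 0 < (v:ℝ) * T := by positivity
    set m := v * (f v).num.toNat / (f v).den with hm
    have hdn : 0 < (f v).den := (f v).pos
    have e1 : m * (f v).den ≤ v * (f v).num.toNat := Nat.div_mul_le_self _ _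
    have e2 : v * (f v).num.toNat < (m + 1) * (f v).den := by
      have := Nat.lt_div_mul_add (a := v * (f v).num.toNat) hdn
      rw [← hm] at this; linarith [this, add_mul m 1 (f v).den]
    have e1' : (m:ℝ) * (f v).den ≤ v * (f v).num.toNat := by exact_mod_cast e1
    have e2' : (v:ℝ) * (f v).num.toNat < (m + 1) * (f v).den := by exact_mod_cast e2
    rcases le_or_gt 0 (f v).num with hn | hn
    · have hn2 : (((f v).num.toNat : ℕ) : ℝ) = (f v).num := by exact_mod_cast Int.toNat_of_nonneg hn
      rw [hn2] at e1' e2'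
      have g1 : (m : ℝ) ≤ v * f v := by
        rw [hfe, mul_div_assoc', le_div_iff₀ hd]; exact e1'
      have g2 : (v : ℝ) * f v < m + 1 := by
        rw [hfe, mul_div_assoc', div_lt_iff₀ hd]; exact e2'
      rcases Nat.eq_zero_or_pos m with h0 | h0
      · rw [h0] at g1 g2 ⊢
        simp only [zero_tsub, Nat.cast_zero] at g1 g2 ⊢
        constructor <;> nlinarith
      · have : ((m - 1 : ℕ) : ℝ) = m - 1 := by push_cast [Nat.cast_sub h0]; ring
        rw [this]; constructor <;> nlinarith
    · have : m = 0 := by rw [hm, Int.toNat_eq_zero.2 hn.le]; simp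
      have hf0 : ((f v : ℚ) : ℝ) < 0 := by
        rw [hfe]; exact div_neg_of_neg_of_pos (by exact_mod_cast hn) hd
      rw [this]; simp
      constructor
      · exact hvT
      · nlinarith

/-- homogenized power sum -/
def psum (X : List ℕ) (b c D : ℕ) : ℕ := (X.map (fun x => b ^ x * c ^ (D - x))).sum

theorem prim_sum : Primrec (fun X : List ℕ => X.sum) := by
  refine (Primrec.list_foldr (f := fun X : List ℕ => X) (g := fun _ => 0) (h := fun _ (p : ℕ × ℕ) => p.1 + p.2) Primrec.id (Primrec.const 0) (Primrec.nat_add.comp (Primrec.fst.comp Primrec.snd) (Primrec.snd.comp Primrec.snd)).to₂).of_eq (fun X => ?_)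
  induction X with
  | nil => rfl
  | cons a X ih => simp_all

theorem prim_psum : Primrec (fun q : List ℕ × ℕ × ℕ × ℕ => psum q.1 q.2.1 q.2.2.1 q.2.2.2) := by
  refine prim_sum.comp (Primrec.list_map Primrec.fst ?_)
  have b : Primrec (fun z : (List ℕ × ℕ × ℕ × ℕ) × ℕ => z.1.2.1) := Primrec.fst.comp (Primrec.snd.comp Primrec.fst)
  have c : Primrec (fun z : (List ℕ × ℕ × ℕ × ℕ) × ℕ => z.1.2.2.1) := Primrec.fst.comp (Primrec.snd.comp (Primrec.snd.comp Primrec.fst))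
  have D : Primrec (fun z : (List ℕ × ℕ × ℕ × ℕ) × ℕ => z.1.2.2.2) := Primrec.snd.comp (Primrec.snd.comp (Primrec.snd.comp Primrec.fst))
  exact Primrec.nat_mul.comp (prim_pow.comp b Primrec.snd) (prim_pow.comp c (Primrec.nat_sub.comp D Primrec.snd))

theorem psum_real (X : List ℕ) (b c D : ℕ) (hc : 0 < c) (hD : ∀ x ∈ X, x ≤ D) :
    (psum X b c D : ℝ) = (X.map (fun x => ((b:ℝ)/c) ^ x)).sum * (c:ℝ) ^ D := by
  induction X with
  | nil => simp [psum]
  | cons a X ih =>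
    have ih' := ih (fun x hx => hD x (List.mem_cons_of_mem _ hx))
    have ha : a ≤ D := hD a (List.mem_cons_self ..)
    unfold psum at ih' ⊢
    simp only [List.map_cons, List.sum_cons, Nat.cast_add, ih', add_mul]
    congr 1
    have hc' : (c:ℝ) ≠ 0 := by exact_mod_cast hc.ne'
    push_cast
    rw [div_pow, div_mul_eq_mul_div, eq_div_iff (by positivity), mul_assoc, ← pow_add, Nat.sub_add_cancel ha]

/-- instance data: `(X, Y, m)`; witness data `(v, b, b', c)`. -/
def chkP (t : ℕ → ℕ) (I : List ℕ × List ℕ × ℕ) (w : ℕ × ℕ × ℕ × ℕ) : Prop :=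
  1 ≤ w.1 ∧ 2 ^ w.1 * w.2.1 ^ (I.2.2 * t w.1) < w.2.2.2 ^ (I.2.2 * t w.1) ∧
  w.2.2.2 ^ (I.2.2 * (t w.1 + 3)) < 2 ^ w.1 * w.2.2.1 ^ (I.2.2 * (t w.1 + 3)) ∧
  psum I.1 w.2.2.1 w.2.2.2 (I.1.sum + I.2.1.sum) < psum I.2.1 w.2.1 w.2.2.2 (I.1.sum + I.2.1.sum)

instance (t : ℕ → ℕ) (I : List ℕ × List ℕ × ℕ) (w : ℕ × ℕ × ℕ × ℕ) : Decidable (chkP t I w) := by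
  unfold chkP; infer_instance

def wdec (W : ℕ) : ℕ × ℕ × ℕ × ℕ := (W.unpair.1, W.unpair.2.unpair.1, W.unpair.2.unpair.2.unpair.1, W.unpair.2.unpair.2.unpair.2)

theorem prim_wdec : Primrec wdec := by
  have u1 : Primrec (fun x : ℕ => x.unpair.1) := Primrec.fst.comp Primrec.unpair
  have u2 : Primrec (fun x : ℕ => x.unpair.2) := Primrec.snd.comp Primrec.unpair
  exact u1.pair ((u1.comp u2).pair ((u1.comp (u2.comp u2)).pair (u2.comp (u2.comp u2))))

theorem wdec_surj (w : ℕ × ℕ × ℕ × ℕ) : ∃ W, wdec W = w :=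
  ⟨Nat.pair w.1 (Nat.pair w.2.1 (Nat.pair w.2.2.1 w.2.2.2)), by simp [wdec]⟩

def chk (t : ℕ → ℕ) (I : List ℕ × List ℕ × ℕ) (W : ℕ) : Bool := decide (chkP t I (wdec W))

theorem chk_comp (t : ℕ → ℕ) (ht : Computable t) : Computable₂ (chk t) := by
  -- factor through `t`
  let A := (List ℕ × List ℕ × ℕ) × (ℕ × ℕ × ℕ × ℕ) × ℕ
  have hX : Primrec (fun a : A => a.1.1) := Primrec.fst.comp Primrec.fst
  have hY : Primrec (fun a : A => a.1.2.1) := Primrec.fst.comp (Primrec.snd.comp Primrec.fst)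
  have hm : Primrec (fun a : A => a.1.2.2) := Primrec.snd.comp (Primrec.snd.comp Primrec.fst)
  have hw : Primrec (fun a : A => a.2.1) := Primrec.fst.comp Primrec.snd
  have hv : Primrec (fun a : A => a.2.1.1) := Primrec.fst.comp hw
  have hb : Primrec (fun a : A => a.2.1.2.1) := Primrec.fst.comp (Primrec.snd.comp hw)
  have hb' : Primrec (fun a : A => a.2.1.2.2.1) := Primrec.fst.comp (Primrec.snd.comp (Primrec.snd.comp hw))
  have hc : Primrec (fun a : A => a.2.1.2.2.2) := Primrec.snd.comp (Primrec.snd.comp (Primrec.snd.comp hw))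
  have hu : Primrec (fun a : A => a.2.2) := Primrec.snd.comp Primrec.snd
  have hmu : Primrec (fun a : A => a.1.2.2 * a.2.2) := Primrec.nat_mul.comp hm hu
  have hmu3 : Primrec (fun a : A => a.1.2.2 * (a.2.2 + 3)) := Primrec.nat_mul.comp hm (Primrec.nat_add.comp hu (Primrec.const 3))
  have h2v : Primrec (fun a : A => 2 ^ a.2.1.1) := prim_pow.comp (Primrec.const 2) hv
  have hD : Primrec (fun a : A => a.1.1.sum + a.1.2.1.sum) := Primrec.nat_add.comp (prim_sum.comp hX) (prim_sum.comp hY)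
  have c1 : PrimrecPred (fun a : A => 1 ≤ a.2.1.1) := Primrec.nat_le.comp (Primrec.const 1) hv
  have c2 : PrimrecPred (fun a : A => 2 ^ a.2.1.1 * a.2.1.2.1 ^ (a.1.2.2 * a.2.2) < a.2.1.2.2.2 ^ (a.1.2.2 * a.2.2)) :=
    Primrec.nat_lt.comp (Primrec.nat_mul.comp h2v (prim_pow.comp hb hmu)) (prim_pow.comp hc hmu)
  have c3 : PrimrecPred (fun a : A => a.2.1.2.2.2 ^ (a.1.2.2 * (a.2.2 + 3)) < 2 ^ a.2.1.1 * a.2.1.2.2.1 ^ (a.1.2.2 * (a.2.2 + 3))) :=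
    Primrec.nat_lt.comp (prim_pow.comp hc hmu3) (Primrec.nat_mul.comp h2v (prim_pow.comp hb' hmu3))
  have c4 : PrimrecPred (fun a : A => psum a.1.1 a.2.1.2.2.1 a.2.1.2.2.2 (a.1.1.sum + a.1.2.1.sum) < psum a.1.2.1 a.2.1.2.1 a.2.1.2.2.2 (a.1.1.sum + a.1.2.1.sum)) :=
    Primrec.nat_lt.comp (prim_psum.comp (hX.pair (hb'.pair (hc.pair hD)))) (prim_psum.comp (hY.pair (hb.pair (hc.pair hD))))
  have hall := (c1.and (c2.and (c3.and c4))).decide.to_comp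
  have hin : Computable (fun p : (List ℕ × List ℕ × ℕ) × ℕ => ((p.1, (wdec p.2, t (wdec p.2).1)) : A)) :=
    Computable.fst.pair ((prim_wdec.to_comp.comp Computable.snd).pair (ht.comp (Computable.fst.comp (prim_wdec.to_comp.comp Computable.snd))))
  refine (hall.comp hin).of_eq ?_
  rintro ⟨I, W⟩
  simp only [chk, chkP]


noncomputable def ww (T : ℝ) (m : ℕ) : ℝ := (2:ℝ) ^ (-1 / (m * T))

noncomputable def wsum (w : ℝ) (X : List ℕ) : ℝ := (X.map (fun x => w ^ x)).sum

theorem ww_pos (T : ℝ) (m : ℕ) : 0 < ww T m := Real.rpow_pos_of_pos two_pos _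

theorem ww_pow (T : ℝ) (hT : 0 < T) (m : ℕ) (hm : 1 ≤ m) (u : ℕ) : ww T m ^ (m * u) = (2:ℝ) ^ (-(u:ℝ) / T) := by
  rw [ww, ← Real.rpow_natCast, ← Real.rpow_mul two_pos.le]
  congr 1
  have : (m:ℝ) ≠ 0 := by positivity
  push_cast; field_simp

theorem wsum_mono {a b : ℝ} (ha : 0 ≤ a) (hab : a ≤ b) (X : List ℕ) : wsum a X ≤ wsum b X := by
  unfold wsum
  exact List.sum_le_sum (fun x _ => pow_le_pow_left₀ ha hab x)

theorem wsum_cont (X : List ℕ) : Continuous (fun w => wsum w X) := by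
  induction X with
  | nil => simpa [wsum] using continuous_const
  | cons a X ih =>
    have : (fun w => wsum w (a :: X)) = fun w => w ^ a + wsum w X := by funext w; simp [wsum]
    rw [this]
    exact (continuous_id.pow a).add ih

theorem mem_le_sum' (X : List ℕ) (x : ℕ) (h : x ∈ X) : x ≤ X.sum := List.le_sum_of_mem h

theorem psum_lt_iff (X Y : List ℕ) (b b' c : ℕ) (hc : 0 < c) :
    psum X b' c (X.sum + Y.sum) < psum Y b c (X.sum + Y.sum) ↔ wsum ((b':ℝ)/c) X < wsum ((b:ℝ)/c) Y := by
  have h1 := psum_real X b' c (X.sum + Y.sum) hc (fun x hx => (mem_le_sum' X x hx).trans (by omega))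
  have h2 := psum_real Y b c (X.sum + Y.sum) hc (fun x hx => (mem_le_sum' Y x hx).trans (by omega))
  rw [← Nat.cast_lt (α := ℝ), h1, h2]
  have : (0:ℝ) < (c:ℝ) ^ (X.sum + Y.sum) := by positivity
  exact mul_lt_mul_iff_left₀ this

theorem chk_sound (T : ℝ) (hT : 0 < T) (t : ℕ → ℕ)
    (ht : ∀ v : ℕ, 1 ≤ v → (t v : ℝ) < v * T ∧ (v : ℝ) * T < t v + 3)
    (X Y : List ℕ) (m : ℕ) (hm : 1 ≤ m) (W : ℕ) (h : chk t (X, Y, m) W = true) :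
    wsum (ww T m) X < wsum (ww T m) Y := by
  simp only [chk, decide_eq_true_eq] at h
  generalize wdec W = w at h
  obtain ⟨v, b, b', c⟩ := w
  obtain ⟨hv, h1, h2, h3⟩ := h
  simp only at hv h1 h2 h3
  obtain ⟨t1, t2⟩ := ht v hv
  set u := t v
  have hc : 0 < c := by
    rcases Nat.eq_zero_or_pos c with h0 | h0
    · subst h0
      rcases Nat.eq_zero_or_pos (m * u) with h4 | h4
      · rw [h4] at h1
        simp at h1
      · rw [zero_pow h4.ne'] at h1
        omega
    · exact h0
  rw [psum_lt_iff X Y b b' c hc] at h3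
  have hc' : (0:ℝ) < c := by exact_mod_cast hc
  have h1' : (2:ℝ)^v * ((b:ℝ)/c) ^ (m*u) < 1 := by
    rw [div_pow, mul_div_assoc', div_lt_one (by positivity)]
    exact_mod_cast h1
  have h2' : 1 < (2:ℝ)^v * ((b':ℝ)/c) ^ (m*(u+3)) := by
    rw [div_pow, mul_div_assoc', one_lt_div (by positivity)]
    exact_mod_cast h2
  have g1 : (b:ℝ)/c ≤ ww T m := by
    by_contra hcon
    push Not at hcon
    have : ww T m ^ (m*u) ≤ ((b:ℝ)/c) ^ (m*u) := pow_le_pow_left₀ (ww_pos T m).le hcon.le _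
    rw [ww_pow T hT m hm] at this
    have h5 : (2:ℝ)^v * (2:ℝ) ^ (-(u:ℝ)/T) < 1 := lt_of_le_of_lt (by gcongr) h1'
    rw [← Real.rpow_natCast, ← Real.rpow_add two_pos] at h5
    have h6 : (0:ℝ) ≤ (v:ℝ) + -(u:ℝ)/T := by
      have : (u:ℝ)/T < v := by rw [div_lt_iff₀ hT]; exact t1
      rw [neg_div]; linarith
    exact absurd h5 (not_lt.2 (Real.one_le_rpow one_le_two h6))
  have g2 : ww T m ≤ (b':ℝ)/c := by
    by_contra hcon
    push Not at hcon
    have : ((b':ℝ)/c) ^ (m*(u+3)) ≤ ww T m ^ (m*(u+3)) := pow_le_pow_left₀ (by positivity) hcon.le _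
    rw [ww_pow T hT m hm] at this
    have h5 : 1 < (2:ℝ)^v * (2:ℝ) ^ (-((u+3:ℕ):ℝ)/T) := lt_of_lt_of_le h2' (by gcongr)
    rw [← Real.rpow_natCast, ← Real.rpow_add two_pos] at h5
    have h6 : (v:ℝ) + -((u+3:ℕ):ℝ)/T ≤ 0 := by
      have : (v:ℝ) < ((u+3:ℕ):ℝ)/T := by rw [lt_div_iff₀ hT]; push_cast; exact t2
      rw [neg_div]; linarith
    exact absurd h5 (not_lt.2 (Real.rpow_le_one_of_one_le_of_nonpos one_le_two h6))
  calc wsum (ww T m) X ≤ wsum ((b':ℝ)/c) X := wsum_mono (ww_pos T m).le g2 X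
    _ < wsum ((b:ℝ)/c) Y := h3
    _ ≤ wsum (ww T m) Y := wsum_mono (by positivity) g1 Y

theorem chk_complete (T : ℝ) (hT : 0 < T) (t : ℕ → ℕ)
    (ht : ∀ v : ℕ, 1 ≤ v → (t v : ℝ) < v * T ∧ (v : ℝ) * T < t v + 3)
    (X Y : List ℕ) (m : ℕ) (hm : 1 ≤ m) (h : wsum (ww T m) X < wsum (ww T m) Y) :
    ∃ W, chk t (X, Y, m) W = true := by
  set w := ww T m with hw
  have hw0 : 0 < w := ww_pos T m
  -- approximations with denominator c
  let b : ℕ → ℕ := fun c => ⌈w * c⌉₊ - 1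
  let b' : ℕ → ℕ := fun c => ⌊w * c⌋₊ + 1
  have hb1 : ∀ c : ℕ, 1 ≤ c → ((b c : ℝ)/c < w ∧ w - 1 / c ≤ (b c : ℝ)/c) := by
    intro c hc
    have hc' : (0:ℝ) < c := by exact_mod_cast hc
    have hp : 0 < ⌈w * c⌉₊ := Nat.ceil_pos.2 (by positivity)
    have e : ((b c : ℕ) : ℝ) = ⌈w * c⌉₊ - 1 := by
      simp only [b]; push_cast [Nat.cast_sub hp]; ring
    have h1 := Nat.ceil_lt_add_one (show 0 ≤ w * c by positivity)
    have h2 := Nat.le_ceil (w * c)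
    constructor
    · rw [div_lt_iff₀ hc', e]; linarith
    · rw [le_div_iff₀ hc', e, sub_mul, one_div_mul_cancel hc'.ne']; linarith
  have hb2 : ∀ c : ℕ, 1 ≤ c → (w < (b' c : ℝ)/c ∧ (b' c : ℝ)/c ≤ w + 1 / c) := by
    intro c hc
    have hc' : (0:ℝ) < c := by exact_mod_cast hc
    have h1 := Nat.lt_floor_add_one (w * c)
    have h2 := Nat.floor_le (show 0 ≤ w * c by positivity)
    constructor
    · rw [lt_div_iff₀ hc']; simp only [b']; push_cast; linarith
    · rw [div_le_iff₀ hc', add_mul, one_div_mul_cancel hc'.ne']; simp only [b']; push_cast; linarith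
  have hz : Tendsto (fun c : ℕ => (1:ℝ)/c) atTop (nhds 0) := tendsto_one_div_atTop_nhds_zero_nat
  have lim1 : Tendsto (fun c : ℕ => (b c : ℝ)/c) atTop (nhds w) := by
    have : Tendsto (fun c : ℕ => w - (1:ℝ)/c) atTop (nhds w) := by simpa using hz.const_sub w
    refine tendsto_of_tendsto_of_tendsto_of_le_of_le' this tendsto_const_nhds ?_ ?_
    · filter_upwards [eventually_ge_atTop 1] with c hc using (hb1 c hc).2
    · filter_upwards [eventually_ge_atTop 1] with c hc using (hb1 c hc).1.le
  have lim2 : Tendsto (fun c : ℕ => (b' c : ℝ)/c) atTop (nhds w) := by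
    have : Tendsto (fun c : ℕ => w + (1:ℝ)/c) atTop (nhds w) := by simpa using hz.const_add w
    refine tendsto_of_tendsto_of_tendsto_of_le_of_le' tendsto_const_nhds this ?_ ?_
    · filter_upwards [eventually_ge_atTop 1] with c hc using (hb2 c hc).1.le
    · filter_upwards [eventually_ge_atTop 1] with c hc using (hb2 c hc).2
  have l1 := ((wsum_cont Y).tendsto w).comp lim1
  have l2 := ((wsum_cont X).tendsto w).comp lim2
  have hev := l2.eventually_lt l1 h
  obtain ⟨c, hc1, hc⟩ := (hev.and (eventually_ge_atTop 1)).exists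
  simp only [Function.comp] at hc1
  have hc' : (0:ℝ) < c := by exact_mod_cast hc
  obtain ⟨p1, -⟩ := hb1 c hc
  obtain ⟨p2, -⟩ := hb2 c hc
  set β := (b c : ℝ)/c with hβ
  set β' := (b' c : ℝ)/c with hβ'
  have hβ0 : 0 ≤ β := by positivity
  -- choose v
  have hmT : 0 < (m:ℝ) * T := by positivity
  have hu : Tendsto (fun v => m * t v) atTop atTop := by
    have h3 : Tendsto (fun v : ℕ => (v:ℝ) * T - 3) atTop atTop :=
      tendsto_atTop_add_const_right _ _ (tendsto_natCast_atTop_atTop.atTop_mul_const hT)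
    have h4 : Tendsto (fun v : ℕ => (t v : ℝ)) atTop atTop := by
      refine tendsto_atTop_mono' _ ?_ h3
      filter_upwards [eventually_ge_atTop 1] with v hv
      linarith [(ht v hv).2]
    have h5 : Tendsto t atTop atTop := tendsto_natCast_atTop_iff.1 h4
    exact tendsto_atTop_mono (fun v => Nat.le_mul_of_pos_left _ hm) h5
  have hu3 : Tendsto (fun v => m * (t v + 3)) atTop atTop := tendsto_atTop_mono (fun v => by gcongr; omega) hu
  have r1 : β / w < 1 := (div_lt_one hw0).2 p1
  have r2 : 1 < β' / w := (one_lt_div hw0).2 p2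
  have q1 : Tendsto (fun v => (β / w) ^ (m * t v)) atTop (nhds 0) :=
    (tendsto_pow_atTop_nhds_zero_of_lt_one (by positivity) r1).comp hu
  have q2 : Tendsto (fun v => (β' / w) ^ (m * (t v + 3))) atTop atTop :=
    (tendsto_pow_atTop_atTop_of_one_lt r2).comp hu3
  have k1 : ∀ᶠ v in atTop, (β / w) ^ (m * t v) < (2:ℝ) ^ (-(3 / T)) :=
    q1.eventually_lt_const (by positivity)
  have k2 : ∀ᶠ v in atTop, (2:ℝ) ^ (3 / T) < (β' / w) ^ (m * (t v + 3)) :=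
    q2.eventually_gt_atTop _
  obtain ⟨v, ⟨k1, k2⟩, hv⟩ := ((k1.and k2).and (eventually_ge_atTop 1)).exists
  obtain ⟨t1, t2⟩ := ht v hv
  obtain ⟨W, hW⟩ := wdec_surj (v, b c, b' c, c)
  refine ⟨W, ?_⟩
  simp only [chk, decide_eq_true_eq, hW, chkP]
  refine ⟨hv, ?_, ?_, ?_⟩
  · have : (2:ℝ)^v * β ^ (m * t v) < 1 := by
      have e : β ^ (m * t v) = (β / w) ^ (m * t v) * (2:ℝ) ^ (-(t v : ℝ)/T) := by
        rw [← ww_pow T hT m hm, ← hw, ← mul_pow, div_mul_cancel₀ _ hw0.ne']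
      rw [e]
      calc (2:ℝ)^v * ((β / w) ^ (m * t v) * (2:ℝ) ^ (-(t v : ℝ)/T)) 
          < (2:ℝ)^v * ((2:ℝ) ^ (-(3 / T)) * (2:ℝ) ^ (-(t v : ℝ)/T)) := by gcongr
        _ = (2:ℝ) ^ ((v:ℝ) + (-(3/T) + -(t v : ℝ)/T)) := by
          rw [Real.rpow_add two_pos, Real.rpow_add two_pos, Real.rpow_natCast]
        _ ≤ 1 := by
          refine Real.rpow_le_one_of_one_le_of_nonpos one_le_two ?_
          have : (v:ℝ) < ((t v : ℝ)+3)/T := by rw [lt_div_iff₀ hT]; exact t2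
          rw [add_div] at this
          rw [neg_div]; linarith
    rw [hβ, div_pow, mul_div_assoc', div_lt_one (by positivity)] at this
    exact_mod_cast this
  · have : 1 < (2:ℝ)^v * β' ^ (m * (t v + 3)) := by
      have e : β' ^ (m * (t v + 3)) = (β' / w) ^ (m * (t v + 3)) * (2:ℝ) ^ (-((t v + 3 : ℕ) : ℝ)/T) := by
        rw [← ww_pow T hT m hm, ← hw, ← mul_pow, div_mul_cancel₀ _ hw0.ne']
      rw [e]
      calc 1 ≤ (2:ℝ) ^ ((v:ℝ) + ((3/T) + -((t v + 3 : ℕ) : ℝ)/T)) := by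
            refine Real.one_le_rpow one_le_two ?_
            have : (t v : ℝ)/T < (v:ℝ) := by rw [div_lt_iff₀ hT]; exact t1
            push_cast
            rw [neg_div, add_div]; linarith
        _ = (2:ℝ)^v * ((2:ℝ) ^ (3 / T) * (2:ℝ) ^ (-((t v + 3 : ℕ) : ℝ)/T)) := by
          rw [Real.rpow_add two_pos, Real.rpow_add two_pos, Real.rpow_natCast]
        _ < _ := by gcongr
    rw [hβ', div_pow, mul_div_assoc', one_lt_div (by positivity)] at this
    exact_mod_cast this
  · rw [psum_lt_iff _ _ _ _ _ hc]
    exact hc1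


theorem pf_ud (S : Set (List Bool)) (hS : PrefixFree S) (h0 : [] ∉ S) : InformationTheory.UniquelyDecodable S := by
  intro L₁
  induction L₁ with
  | nil =>
    intro L₂ _ h2 h
    cases L₂ with
    | nil => rfl
    | cons b L₂ =>
      simp at h
      exact absurd (h2 b (by simp)) (by rw [h.1]; exact h0)
  | cons a L₁ ih =>
    intro L₂ h1 h2 h
    cases L₂ with
    | nil =>
      simp at h
      exact absurd (h1 a (by simp)) (by rw [h.1]; exact h0)
    | cons b L₂ =>
      simp only [List.flatten_cons] at h
      have ha := h1 a (by simp)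
      have hb := h2 b (by simp)
      have hab : a = b := by
        have p1 : a <+: a ++ L₁.flatten := List.prefix_append _ _
        have p2 : b <+: a ++ L₁.flatten := by rw [h]; exact List.prefix_append _ _
        rcases List.prefix_or_prefix_of_prefix p1 p2 with h' | h'
        · exact hS a ha b hb h'
        · exact (hS b hb a ha h').symm
      subst hab
      rw [List.append_cancel_left_eq] at h
      rw [ih L₂ (fun w hw => h1 w (by simp [hw])) (fun w hw => h2 w (by simp [hw])) h]

theorem kraft_fin (S : Finset (List Bool)) (hS : PrefixFree (S : Set (List Bool))) :
    ∑ w ∈ S, ((1:ℝ)/2) ^ w.length ≤ 1 := by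
  by_cases h0 : [] ∈ S
  · have : S = {[]} := by
      ext w
      simp only [Finset.mem_singleton]
      constructor
      · intro hw
        exact (hS [] h0 w hw (List.nil_prefix)).symm
      · rintro rfl; exact h0
    rw [this]; simp
  · have := InformationTheory.kraft_mcmillan_inequality (S := S) (pf_ud _ hS h0)
    simpa using this

noncomputable def oterm (U : Computer) (p : U.domain) : ℝ := ((1:ℝ)/2) ^ (p : List Bool).length

theorem kraft_U (U : Computer) (s : Finset U.domain) : ∑ p ∈ s, oterm U p ≤ 1 := by
  have := kraft_fin (s.map ⟨Subtype.val, Subtype.val_injective⟩) (by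
    intro p hp q hq
    simp at hp hq
    exact U.prefixFree p hp.1 q hq.1)
  simpa [oterm] using this

theorem oterm_summable (U : Computer) : Summable (oterm U) :=
  summable_of_sum_le (fun _ => by unfold oterm; positivity) (kraft_U U)

theorem oterm_tsum_le (U : Computer) : ∑' p, oterm U p ≤ 1 :=
  (oterm_summable U).tsum_le_of_sum_le (kraft_U U)

theorem zterm_pos (U : Computer) (T : ℝ) (p) : 0 < zterm U T p := Real.rpow_pos_of_pos two_pos _

theorem oterm_rpow (U : Computer) (p : U.domain) : oterm U p = (2:ℝ) ^ (-((p : List Bool).length : ℝ)) := by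
  rw [oterm, Real.rpow_neg two_pos.le, Real.rpow_natCast]; simp

theorem zterm_le (U : Computer) (T : ℝ) (hT0 : 0 < T) (hT1 : T ≤ 1) (p) : zterm U T p ≤ oterm U p := by
  rw [oterm_rpow, zterm]
  apply Real.rpow_le_rpow_of_exponent_le one_le_two
  rw [neg_div, neg_le_neg_iff, le_div_iff₀ hT0]
  exact mul_le_of_le_one_right (by positivity) hT1

theorem zterm_summable (U : Computer) (T : ℝ) (hT0 : 0 < T) (hT1 : T ≤ 1) : Summable (zterm U T) :=
  Summable.of_nonneg_of_le (fun p => (zterm_pos U T p).le) (zterm_le U T hT0 hT1) (oterm_summable U)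

theorem z_le_one (U : Computer) (T : ℝ) (hT0 : 0 < T) (hT1 : T ≤ 1) : ∑' p, zterm U T p ≤ 1 :=
  ((zterm_summable U T hT0 hT1).tsum_le_tsum (zterm_le U T hT0 hT1) (oterm_summable U)).trans (oterm_tsum_le U)

/-- constant computer with domain the empty word -/
def constC (s : List Bool) : Computer where
  f := fun p => cond (decide (p = [])) (Part.some s) Part.none
  partrec := by
    refine Partrec.cond ?_ (Computable.const s).partrec Partrec.none
    exact (PrimrecPred.decide (Primrec.eq.comp Primrec.id (Primrec.const []))).to_comp
  prefixFree := by
    intro p hp q hq _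
    have hp' : p = [] := by
      by_contra h
      simp [h] at hp
    have hq' : q = [] := by
      by_contra h
      simp [h] at hq
    rw [hp', hq']

theorem exists_prog (U : Computer) (hU : IsOptimal U) (s : List Bool) : ∃ p, s ∈ U.f p := by
  obtain ⟨d, hd⟩ := hU (constC s)
  obtain ⟨p', _, h⟩ := hd [] (by simp [constC])
  exact ⟨p', h s (by simp [constC])⟩

theorem H_spec (U : Computer) (hU : IsOptimal U) (s : List Bool) : ∃ p, p.length = H U s ∧ s ∈ U.f p := by
  have : H U s ∈ {n | ∃ p : List Bool, p.length = n ∧ s ∈ U.f p} := by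
    apply Nat.sInf_mem
    obtain ⟨p, hp⟩ := exists_prog U hU s
    exact ⟨_, p, rfl, hp⟩
  exact this

theorem H_le (U : Computer) (s p : List Bool) (h : s ∈ U.f p) : H U s ≤ p.length :=
  Nat.sInf_le ⟨p, rfl, h⟩

theorem z_pos (U : Computer) (hU : IsOptimal U) (T : ℝ) (hT0 : 0 < T) (hT1 : T ≤ 1) : 0 < ∑' p, zterm U T p := by
  obtain ⟨p, hp⟩ := exists_prog U hU []
  have hd : (U.f p).Dom := (Part.dom_iff_mem).2 ⟨_, hp⟩
  exact (zterm_summable U T hT0 hT1).tsum_pos (fun p => (zterm_pos U T p).le) ⟨p, hd⟩ (zterm_pos U T _)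

/-- stages -/
def stepf (c : Nat.Partrec.Code) (k i : ℕ) : Option (List Bool × List Bool) :=
  (c.evaln k i).bind fun o => (Encodable.decode₂ (List Bool) i).bind fun p => (Encodable.decode (α := List Bool) o).map fun s => (p, s)

def stg (c : Nat.Partrec.Code) (k : ℕ) : List (List Bool × List Bool) := (List.range k).filterMap (stepf c k)

theorem stg_prim (c : Nat.Partrec.Code) : Primrec (stg c) := by
  refine Primrec.listFilterMap Primrec.list_range ?_
  have h1 : Primrec (fun z : ℕ × ℕ => c.evaln z.1 z.2) :=
    Nat.Partrec.Code.primrec_evaln.comp ((Primrec.fst.pair (Primrec.const c)).pair Primrec.snd)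
  refine Primrec.option_bind h1 ?_
  refine Primrec.option_bind (Primrec.decode₂.comp (Primrec.snd.comp Primrec.fst)) ?_
  refine Primrec.option_map (Primrec.decode.comp (Primrec.snd.comp Primrec.fst)) ?_
  exact (Primrec.snd.comp Primrec.fst).pair Primrec.snd

def CodeFor (U : Computer) (c : Nat.Partrec.Code) : Prop :=
  c.eval = fun n => Part.bind (Encodable.decode (α := List Bool) n : Option (List Bool)) fun a => (U.f a).map Encodable.encode

theorem exists_codeFor (U : Computer) : ∃ c, CodeFor U c := Nat.Partrec.Code.exists_code.1 U.partrec

theorem mem_stg {U : Computer} {c : Nat.Partrec.Code} (hc : CodeFor U c) (k : ℕ) (p s : List Bool) :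
    (p, s) ∈ stg c k ↔ Encodable.encode p < k ∧ Encodable.encode s ∈ c.evaln k (Encodable.encode p) := by
  have key : ∀ i o, o ∈ c.evaln k i → ∀ p, Encodable.encode p = i → ∃ s', o = Encodable.encode s' ∧ s' ∈ U.f p := by
    intro i o ho p hp
    have := Nat.Partrec.Code.evaln_sound ho
    rw [hc, ← hp] at this
    simp at this
    obtain ⟨a, ha, hb⟩ := this
    exact ⟨a, hb.symm, ha⟩
  simp only [stg, List.mem_filterMap, List.mem_range, stepf, Option.bind_eq_some_iff, Option.map_eq_some_iff, Encodable.decode₂_eq_some]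
  constructor
  · rintro ⟨i, hi, o, ho, p', hp', s', hs', he⟩
    cases he
    obtain ⟨s'', h1, h2⟩ := key i o ho p hp'
    rw [h1, Encodable.encodek] at hs'
    cases hs'
    subst hp'
    rw [h1] at ho
    exact ⟨hi, ho⟩
  · rintro ⟨h1, h2⟩
    exact ⟨_, h1, _, h2, p, rfl, s, Encodable.encodek s, rfl⟩

theorem stg_sound {U : Computer} {c : Nat.Partrec.Code} (hc : CodeFor U c) {k : ℕ} {p s : List Bool}
    (h : (p, s) ∈ stg c k) : s ∈ U.f p := by
  have := Nat.Partrec.Code.evaln_sound ((mem_stg hc k p s).1 h).2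
  rw [hc] at this
  simp at this
  exact this

theorem stg_complete {U : Computer} {c : Nat.Partrec.Code} (hc : CodeFor U c) {p s : List Bool}
    (h : s ∈ U.f p) : ∃ k, (p, s) ∈ stg c k := by
  have : Encodable.encode s ∈ c.eval (Encodable.encode p) := by
    rw [hc]; simpa using h
  obtain ⟨k, hk⟩ := Nat.Partrec.Code.evaln_complete.1 this
  refine ⟨k, (mem_stg hc k p s).2 ⟨Nat.Partrec.Code.evaln_bound hk, hk⟩⟩

theorem stg_mono {U : Computer} {c : Nat.Partrec.Code} (hc : CodeFor U c) {k l : ℕ} (hkl : k ≤ l) {p s : List Bool}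
    (h : (p, s) ∈ stg c k) : (p, s) ∈ stg c l := by
  rw [mem_stg hc] at h ⊢
  exact ⟨h.1.trans_le hkl, Nat.Partrec.Code.evaln_mono hkl h.2⟩

theorem stg_nodup {U : Computer} {c : Nat.Partrec.Code} (hc : CodeFor U c) (k : ℕ) :
    ((stg c k).map Prod.fst).Nodup := by
  apply List.Nodup.map_on
  · rintro ⟨p, s⟩ h ⟨q, r⟩ h' he
    simp only at he
    subst he
    rw [Part.mem_unique (stg_sound hc h) (stg_sound hc h')]
  · refine List.Nodup.filterMap ?_ (List.nodup_range)
    rintro i j ⟨p, s⟩ h1 h2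
    simp only [stepf, Option.mem_def, Option.bind_eq_some_iff, Option.map_eq_some_iff, Encodable.decode₂_eq_some] at h1 h2
    obtain ⟨o, ho, p', hp', s', hs', he⟩ := h1
    obtain ⟨o1, ho1, p1, hp1, s1, hs1, he1⟩ := h2
    cases he; cases he1
    omega

open Classical in
noncomputable def SS (U : Computer) (c : Nat.Partrec.Code) (k : ℕ) : Finset U.domain :=
  ((stg c k).map Prod.fst).toFinset.subtype (fun p => p ∈ U.domain)

theorem mem_SS {U : Computer} {c : Nat.Partrec.Code} (k : ℕ) (p : U.domain) :
    p ∈ SS U c k ↔ ∃ s, (p.1, s) ∈ stg c k := by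
  simp [SS]

theorem SS_mono {U : Computer} {c : Nat.Partrec.Code} (hc : CodeFor U c) : Monotone (SS U c) := by
  intro k l hkl p hp
  rw [mem_SS] at hp ⊢
  obtain ⟨s, hs⟩ := hp
  exact ⟨s, stg_mono hc hkl hs⟩

theorem SS_ex {U : Computer} {c : Nat.Partrec.Code} (hc : CodeFor U c) (p : U.domain) : ∃ k, p ∈ SS U c k := by
  obtain ⟨s, hs⟩ := Part.dom_iff_mem.1 p.2
  obtain ⟨k, hk⟩ := stg_complete hc hs
  exact ⟨k, (mem_SS k p).2 ⟨s, hk⟩⟩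

theorem SS_tendsto {U : Computer} {c : Nat.Partrec.Code} (hc : CodeFor U c) : Tendsto (SS U c) atTop atTop :=
  tendsto_atTop_finset_of_monotone (SS_mono hc) (SS_ex hc)

def lens (c : Nat.Partrec.Code) (k : ℕ) : List ℕ := (stg c k).map (fun q => q.1.length)

theorem lens_prim (c : Nat.Partrec.Code) : Primrec (lens c) :=
  Primrec.list_map (stg_prim c) (Primrec.list_length.comp (Primrec.fst.comp Primrec.snd)).to₂

theorem lens_sum {U : Computer} {c : Nat.Partrec.Code} (hc : CodeFor U c) (k : ℕ) (g : ℕ → ℝ) :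
    ((lens c k).map g).sum = ∑ p ∈ SS U c k, g p.1.length := by
  classical
  have h1 : ((lens c k).map g) = ((stg c k).map Prod.fst).map (fun p => g p.length) := by
    simp [lens, Function.comp_def]
  rw [h1, ← List.sum_toFinset _ (stg_nodup hc k)]
  rw [SS]
  rw [Finset.sum_subtype_of_mem (fun p : List Bool => g p.length)]
  · intro p hp
    simp at hp
    obtain ⟨s, hs⟩ := hp
    exact Part.dom_iff_mem.2 ⟨s, stg_sound hc hs⟩


noncomputable def Zk (U : Computer) (T : ℝ) (c : Nat.Partrec.Code) (k : ℕ) : ℝ := ∑ p ∈ SS U c k, zterm U T p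

noncomputable def phi (T x : ℝ) : ℝ := (2:ℝ) ^ (-x / T)

theorem phi_pos (T x : ℝ) : 0 < phi T x := Real.rpow_pos_of_pos two_pos _

theorem phi_lt (T : ℝ) (hT : 0 < T) (x y : ℝ) : phi T x < phi T y ↔ y < x := by
  unfold phi
  rw [Real.rpow_lt_rpow_left_iff one_lt_two, div_lt_div_iff_of_pos_right hT, neg_lt_neg_iff]

theorem phi_add (T x y : ℝ) : phi T (x + y) = phi T x * phi T y := by
  unfold phi
  rw [← Real.rpow_add two_pos]; congr 1; ring

theorem phi_log (T : ℝ) (hT : 0 < T) (z : ℝ) (hz : 0 < z) : phi T (-T * Real.logb 2 z) = z := by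
  unfold phi
  have : -(-T * Real.logb 2 z) / T = Real.logb 2 z := by field_simp
  rw [this, Real.rpow_logb two_pos (by norm_num) hz]

theorem ww_phi (T : ℝ) (hT : 0 < T) (n a : ℕ) : ww T (2 ^ n) ^ a = phi T ((a:ℝ) / 2 ^ n) := by
  rw [ww, phi, ← Real.rpow_natCast, ← Real.rpow_mul two_pos.le]
  congr 1
  push_cast; field_simp

section
variable {U : Computer} {c : Nat.Partrec.Code} {T : ℝ}

theorem Zk_le (hT0 : 0 < T) (hT1 : T ≤ 1) (k : ℕ) : Zk U T c k ≤ ∑' p, zterm U T p :=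
  (zterm_summable U T hT0 hT1).sum_le_tsum _ (fun p _ => (zterm_pos U T p).le)

theorem Zk_tendsto (hc : CodeFor U c) (hT0 : 0 < T) (hT1 : T ≤ 1) :
    Tendsto (Zk U T c) atTop (nhds (∑' p, zterm U T p)) :=
  ((zterm_summable U T hT0 hT1).hasSum).comp (SS_tendsto hc)

theorem lens_Z (hc : CodeFor U c) (hT0 : 0 < T) (n k : ℕ) :
    wsum (ww T (2 ^ n)) ((lens c k).map (fun l => 2 ^ n * l)) = Zk U T c k := by
  have := lens_sum hc k (fun l => (2:ℝ) ^ (-(l:ℝ) / T))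
  rw [Zk]
  unfold zterm
  rw [← this, wsum, List.map_map]
  congr 1
  apply List.map_congr_left
  intro l _
  simp only [Function.comp]
  rw [ww_pow T hT0 _ (Nat.one_le_two_pow)]

theorem lens_Z2 (hc : CodeFor U c) (hT0 : 0 < T) (n k : ℕ) :
    wsum (ww T (2 ^ n)) ((lens c k).map (fun l => 2 ^ n * l + 1)) = phi T (1 / 2 ^ n) * Zk U T c k := by
  rw [← lens_Z hc hT0 n k, wsum, wsum, List.map_map, List.map_map, ← List.sum_map_mul_left]
  congr 1
  apply List.map_congr_left
  intro l _
  simp only [Function.comp]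
  have := ww_phi T hT0 n 1
  simp only [pow_one, Nat.cast_one] at this
  rw [pow_succ, this]; ring

def D1 (t : ℕ → ℕ) (c : Nat.Partrec.Code) (na : ℕ × ℕ) (y : ℕ × ℕ) : Bool :=
  chk t ([na.2], (lens c y.1).map (fun l => 2 ^ na.1 * l), 2 ^ na.1) y.2

def D2 (t : ℕ → ℕ) (c : Nat.Partrec.Code) (na : ℕ × ℕ) (y : ℕ × ℕ) : Bool :=
  chk t ((lens c y.1).map (fun l => 2 ^ na.1 * l + 1), [na.2], 2 ^ na.1) y.2

theorem D1_comp {t : ℕ → ℕ} (ht : Computable t) (c : Nat.Partrec.Code) : Computable₂ (D1 t c) := by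
  have hp : Primrec (fun z : (ℕ × ℕ) × ℕ × ℕ => 2 ^ z.1.1) := prim_pow.comp (Primrec.const 2) (Primrec.fst.comp Primrec.fst)
  have h1 : Primrec (fun z : (ℕ × ℕ) × ℕ × ℕ => [z.1.2]) :=
    Primrec.list_cons.comp (Primrec.snd.comp Primrec.fst) (Primrec.const [])
  have h2 : Primrec (fun z : (ℕ × ℕ) × ℕ × ℕ => (lens c z.2.1).map (fun l => 2 ^ z.1.1 * l)) :=
    Primrec.list_map ((lens_prim c).comp (Primrec.fst.comp Primrec.snd))
      (Primrec.nat_mul.comp (hp.comp Primrec.fst) Primrec.snd).to₂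
  exact (chk_comp t ht).comp (h1.pair (h2.pair hp)).to_comp (Computable.snd.comp Computable.snd)

theorem D2_comp {t : ℕ → ℕ} (ht : Computable t) (c : Nat.Partrec.Code) : Computable₂ (D2 t c) := by
  have hp : Primrec (fun z : (ℕ × ℕ) × ℕ × ℕ => 2 ^ z.1.1) := prim_pow.comp (Primrec.const 2) (Primrec.fst.comp Primrec.fst)
  have h1 : Primrec (fun z : (ℕ × ℕ) × ℕ × ℕ => [z.1.2]) :=
    Primrec.list_cons.comp (Primrec.snd.comp Primrec.fst) (Primrec.const [])
  have h2 : Primrec (fun z : (ℕ × ℕ) × ℕ × ℕ => (lens c z.2.1).map (fun l => 2 ^ z.1.1 * l + 1)) :=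
    Primrec.list_map ((lens_prim c).comp (Primrec.fst.comp Primrec.snd))
      (Primrec.succ.comp (Primrec.nat_mul.comp (hp.comp Primrec.fst) Primrec.snd)).to₂
  exact (chk_comp t ht).comp (h2.pair (h1.pair hp)).to_comp (Computable.snd.comp Computable.snd)

def TApprox (T : ℝ) (t : ℕ → ℕ) : Prop := ∀ v : ℕ, 1 ≤ v → (t v : ℝ) < v * T ∧ (v : ℝ) * T < t v + 3

variable {t : ℕ → ℕ}

theorem wsum_single (w : ℝ) (a : ℕ) : wsum w [a] = w ^ a := by simp [wsum]

theorem D1_sound (hc : CodeFor U c) (hT0 : 0 < T) (ht : TApprox T t) {n a k W : ℕ} (h : D1 t c (n, a) (k, W) = true) :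
    phi T ((a:ℝ) / 2 ^ n) < Zk U T c k := by
  have := chk_sound T hT0 t ht _ _ _ Nat.one_le_two_pow _ h
  simp only at this
  rwa [lens_Z hc hT0, wsum_single, ww_phi T hT0] at this

theorem D1_complete (hc : CodeFor U c) (hT0 : 0 < T) (ht : TApprox T t) {n a k : ℕ}
    (h : phi T ((a:ℝ) / 2 ^ n) < Zk U T c k) : ∃ W, D1 t c (n, a) (k, W) = true := by
  refine chk_complete T hT0 t ht [a] ((lens c k).map (fun l => 2 ^ n * l)) (2 ^ n) Nat.one_le_two_pow ?_
  rwa [lens_Z hc hT0, wsum_single, ww_phi T hT0]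

theorem D1_complete' (hc : CodeFor U c) (hT0 : 0 < T) (hT1 : T ≤ 1) (ht : TApprox T t) {n a : ℕ}
    (h : phi T ((a:ℝ) / 2 ^ n) < ∑' p, zterm U T p) : ∃ y, D1 t c (n, a) y = true := by
  obtain ⟨k, hk⟩ := ((Zk_tendsto hc hT0 hT1).eventually (lt_mem_nhds h)).exists
  obtain ⟨W, hW⟩ := D1_complete hc hT0 ht hk
  exact ⟨_, hW⟩

theorem D2_sound (hc : CodeFor U c) (hT0 : 0 < T) (ht : TApprox T t) {n a k W : ℕ} (h : D2 t c (n, a) (k, W) = true) :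
    phi T (1 / 2 ^ n) * Zk U T c k < phi T ((a:ℝ) / 2 ^ n) := by
  have := chk_sound T hT0 t ht _ _ _ Nat.one_le_two_pow _ h
  simp only at this
  rwa [lens_Z2 hc hT0, wsum_single, ww_phi T hT0] at this

theorem D2_complete (hc : CodeFor U c) (hT0 : 0 < T) (ht : TApprox T t) {n a k : ℕ}
    (h : phi T (1 / 2 ^ n) * Zk U T c k < phi T ((a:ℝ) / 2 ^ n)) : ∃ W, D2 t c (n, a) (k, W) = true := by
  refine chk_complete T hT0 t ht ((lens c k).map (fun l => 2 ^ n * l + 1)) [a] (2 ^ n) Nat.one_le_two_pow ?_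
  rwa [lens_Z2 hc hT0, wsum_single, ww_phi T hT0]

end


def cdec (i : ℕ) : (ℕ × ℕ) × (ℕ × ℕ) := ((i.unpair.1.unpair.1, i.unpair.1.unpair.2), (i.unpair.2.unpair.1, i.unpair.2.unpair.2))

theorem prim_cdec : Primrec cdec := by
  have u1 : Primrec (fun x : ℕ => x.unpair.1) := Primrec.fst.comp Primrec.unpair
  have u2 : Primrec (fun x : ℕ => x.unpair.2) := Primrec.snd.comp Primrec.unpair
  exact ((u1.comp u1).pair (u2.comp u1)).pair ((u1.comp u2).pair (u2.comp u2))

theorem cdec_surj (w) : ∃ i, cdec i = w :=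
  ⟨Nat.pair (Nat.pair w.1.1 w.1.2) (Nat.pair w.2.1 w.2.2), by simp [cdec]⟩

def cand (t : ℕ → ℕ) (c : Nat.Partrec.Code) (B i : ℕ) : ℕ × ℕ :=
  cond (D1 t c ((cdec i).1.1, (cdec i).1.2 + 1) (cdec i).2) ((cdec i).1.2, (cdec i).1.1) (B, 0)

theorem cand_comp {t : ℕ → ℕ} (ht : Computable t) (c : Nat.Partrec.Code) (B : ℕ) : Computable (cand t c B) := by
  have h1 : Computable (fun i => (cdec i).1.1) := (Primrec.fst.comp (Primrec.fst.comp prim_cdec)).to_comp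
  have h2 : Computable (fun i => (cdec i).1.2) := (Primrec.snd.comp (Primrec.fst.comp prim_cdec)).to_comp
  have h3 : Computable (fun i => (cdec i).2) := (Primrec.snd.comp prim_cdec).to_comp
  exact Computable.cond ((D1_comp ht c).comp (h1.pair (Computable.succ.comp h2)) h3) (h2.pair h1) (Computable.const _)

def mstep (M q : ℕ × ℕ) : ℕ × ℕ := cond (decide ((q.1 + 1) * 2 ^ M.2 < (M.1 + 1) * 2 ^ q.2)) q M

theorem mstep_prim : Primrec₂ mstep := by
  have h1 : Primrec (fun z : (ℕ × ℕ) × (ℕ × ℕ) => (z.2.1 + 1) * 2 ^ z.1.2) :=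
    Primrec.nat_mul.comp (Primrec.succ.comp (Primrec.fst.comp Primrec.snd)) (prim_pow.comp (Primrec.const 2) (Primrec.snd.comp Primrec.fst))
  have h2 : Primrec (fun z : (ℕ × ℕ) × (ℕ × ℕ) => (z.1.1 + 1) * 2 ^ z.2.2) :=
    Primrec.nat_mul.comp (Primrec.succ.comp (Primrec.fst.comp Primrec.fst)) (prim_pow.comp (Primrec.const 2) (Primrec.snd.comp Primrec.snd))
  exact Primrec.cond (PrimrecPred.decide (Primrec.nat_lt.comp h1 h2)) Primrec.snd Primrec.fst

def mrun (t : ℕ → ℕ) (c : Nat.Partrec.Code) (B i : ℕ) : ℕ × ℕ :=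
  Nat.rec (motive := fun _ => ℕ × ℕ) (B, 0) (fun j M => mstep M (cand t c B j)) i

theorem mrun_comp {t : ℕ → ℕ} (ht : Computable t) (c : Nat.Partrec.Code) (B : ℕ) : Computable (mrun t c B) := by
  refine Computable.nat_rec (f := fun i : ℕ => i) (g := fun _ => (B, 0)) (h := fun _ (z : ℕ × ℕ × ℕ) => mstep z.2 (cand t c B z.1)) Computable.id (Computable.const _) ?_
  exact mstep_prim.to_comp.comp (Computable.snd.comp Computable.snd) ((cand_comp ht c B).comp (Computable.fst.comp Computable.snd))

noncomputable def qv (q : ℕ × ℕ) : ℝ := ((q.1:ℝ) + 1) / 2 ^ q.2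

theorem mstep_cases (M q : ℕ × ℕ) : (mstep M q = M ∨ mstep M q = q) ∧ qv (mstep M q) ≤ qv M ∧ qv (mstep M q) ≤ qv q := by
  have key : ((q.1 + 1) * 2 ^ M.2 < (M.1 + 1) * 2 ^ q.2) ↔ qv q < qv M := by
    unfold qv
    rw [div_lt_div_iff₀ (by positivity) (by positivity)]
    exact_mod_cast Iff.rfl
  unfold mstep
  by_cases h : ((q.1 + 1) * 2 ^ M.2 < (M.1 + 1) * 2 ^ q.2)
  · have := key.1 h
    simp [h, this.le]
  · have h' := h
    rw [key] at h'
    simp [h, not_lt.1 h']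

theorem frac_right (F ε : ℝ) (hF : 0 ≤ F) (hε : 0 < ε) : ∃ n a : ℕ, F < ((a:ℝ) + 1) / 2 ^ n ∧ ((a:ℝ) + 1) / 2 ^ n < F + ε := by
  obtain ⟨n, hn⟩ := exists_pow_lt_of_lt_one hε (show (1/2:ℝ) < 1 by norm_num)
  refine ⟨n, ⌊F * 2 ^ n⌋₊, ?_, ?_⟩
  · rw [lt_div_iff₀ (by positivity)]
    exact Nat.lt_floor_add_one _
  · rw [div_lt_iff₀ (by positivity)]
    have := Nat.floor_le (show 0 ≤ F * 2 ^ n by positivity)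
    have h2 : 1 < ε * 2 ^ n := by
      rw [one_div, inv_pow, inv_lt_iff_one_lt_mul₀ (by positivity)] at hn
      linarith
    nlinarith

theorem mq_comp (M : ℕ → ℕ × ℕ) (h1 : Computable M) :
    Computable (fun i => ((((M i).1 + 1 : ℕ) : ℚ) / (((2 ^ (M i).2 - 1) + 1 : ℕ) : ℚ) : ℚ)) := by
  have h2 : Primrec (fun q : ℕ × ℕ => (q.1, 2 ^ q.2 - 1)) :=
    Primrec.fst.pair (Primrec.nat_sub.comp (prim_pow.comp (Primrec.const 2) Primrec.snd) (Primrec.const 1))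
  have h3 := rat_mk_comp.comp (h2.to_comp.comp h1)
  exact h3

theorem right_comp (U : Computer) (c : Nat.Partrec.Code) (hc : CodeFor U c) (T : ℝ) (hT0 : 0 < T) (hT1 : T ≤ 1)
    (t : ℕ → ℕ) (htc : Computable t) (ht : TApprox T t) (F : ℝ) (hF : 0 ≤ F) (hFZ : phi T F = ∑' p, zterm U T p) :
    RightComputable F := by
  obtain ⟨B, hB⟩ := exists_nat_ge F
  have hcand : ∀ i, F ≤ qv (cand t c B i) := by
    intro i
    unfold cand
    cases h : D1 t c ((cdec i).1.1, (cdec i).1.2 + 1) (cdec i).2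
    · simp [qv]; linarith
    · have h1 := D1_sound (k := (cdec i).2.1) (W := (cdec i).2.2) hc hT0 ht h
      have h2 := h1.trans_le (Zk_le hT0 hT1 _)
      rw [← hFZ, phi_lt T hT0] at h2
      simp only [cond_true, qv]
      push_cast at h2
      exact h2.le
  have hm : ∀ i, F ≤ qv (mrun t c B i) := by
    intro i
    induction i with
    | zero => simp [mrun, qv]; linarith
    | succ i ih =>
      have e : mrun t c B (i+1) = mstep (mrun t c B i) (cand t c B i) := rfl
      rcases (mstep_cases (mrun t c B i) (cand t c B i)).1 with h | h
      · rw [e, h]; exact ih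
      · rw [e, h]; exact hcand i
  have hanti : Antitone (fun i => qv (mrun t c B i)) := by
    apply antitone_nat_of_succ_le
    intro i
    exact (mstep_cases (mrun t c B i) (cand t c B i)).2.1
  have hval : ∀ i, ((((mrun t c B i).1 + 1 : ℕ) : ℚ) / (((2 ^ (mrun t c B i).2 - 1) + 1 : ℕ) : ℚ) : ℚ) = (qv (mrun t c B i)) := by
    intro i
    rw [Nat.sub_add_cancel Nat.one_le_two_pow]
    unfold qv; push_cast; rfl
  refine ⟨fun i => ((((mrun t c B i).1 + 1 : ℕ) : ℚ) / (((2 ^ (mrun t c B i).2 - 1) + 1 : ℕ) : ℚ) : ℚ), ?_, ?_, ?_⟩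
  · exact mq_comp _ (mrun_comp htc c B)
  · intro i
    rw [hval]; exact hm i
  · simp only [hval]
    rw [Metric.tendsto_atTop]
    intro ε hε
    obtain ⟨n, a, h1, h2⟩ := frac_right F ε hF hε
    have h3 : phi T (((a + 1 : ℕ):ℝ) / 2 ^ n) < ∑' p, zterm U T p := by
      rw [← hFZ, phi_lt T hT0]; push_cast; exact h1
    obtain ⟨y, hy⟩ := D1_complete' hc hT0 hT1 ht h3
    obtain ⟨i, hi⟩ := cdec_surj ((n, a), y)
    have hci : cand t c B i = (a, n) := by
      unfold cand
      rw [hi]; simp [hy]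
    refine ⟨i + 1, fun j hj => ?_⟩
    have h4 : qv (mrun t c B j) ≤ qv (a, n) := by
      refine (hanti hj).trans ?_
      rw [← hci]
      exact (mstep_cases (mrun t c B i) (cand t c B i)).2.2
    have h5 := hm j
    rw [Real.dist_eq, abs_of_nonneg (by linarith)]
    have : qv (a, n) = ((a:ℝ) + 1) / 2 ^ n := rfl
    linarith


def bval (s : List Bool) : ℕ := s.foldl (fun acc b => 2 * acc + b.toNat) 0

theorem bval_prim : Primrec bval := by
  refine Primrec.list_foldl (f := fun s : List Bool => s) (g := fun _ => 0) (h := fun _ (z : ℕ × Bool) => 2 * z.1 + z.2.toNat) Primrec.id (Primrec.const 0) ?_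
  refine Primrec.nat_add.comp (Primrec.nat_mul.comp (Primrec.const 2) (Primrec.fst.comp Primrec.snd)) ?_
  exact (Primrec.dom_bool _).comp (Primrec.snd.comp Primrec.snd)

theorem bval_append (s : List Bool) (b : Bool) : bval (s ++ [b]) = 2 * bval s + b.toNat := by simp [bval]

theorem bits_succ (x : ℝ) (n : ℕ) : bits x (n+1) = bits x n ++ [binDigit x (n+1)] := by
  simp [bits, List.range_succ]

theorem bits_length (x : ℝ) (n : ℕ) : (bits x n).length = n := by simp [bits]

theorem bval_bits (x : ℝ) (n : ℕ) : (bval (bits x n) : ℤ) = ⌊Int.fract x * 2 ^ n⌋ := by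
  induction n with
  | zero =>
    simp [bits, bval]
  | succ n ih =>
    rw [bits_succ, bval_append]
    push_cast
    rw [ih]
    set z := Int.fract x * 2 ^ n with hz
    have e : Int.fract x * 2 ^ (n+1) = 2 * z := by rw [hz]; ring
    have h1 : 2 * ⌊z⌋ ≤ ⌊2 * z⌋ := by
      rw [Int.le_floor]; push_cast; linarith [Int.floor_le z]
    have h2 : ⌊2 * z⌋ < 2 * ⌊z⌋ + 2 := by
      rw [Int.floor_lt]; push_cast; linarith [Int.lt_floor_add_one z]
    unfold binDigit
    rw [e]
    by_cases h : ⌊2 * z⌋ % 2 = 1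
    · simp [h]; omega
    · simp [h]; omega

theorem floor_bits (F : ℝ) (hF : 0 ≤ F) (n : ℕ) : ⌊F * 2 ^ n⌋₊ = ⌊F⌋₊ * 2 ^ n + bval (bits F n) := by
  have h := bval_bits F n
  have h1 : (⌊F⌋₊ : ℝ) = (⌊F⌋ : ℝ) := by
    exact natCast_floor_eq_intCast_floor hF
  have h2 : Int.fract F = F - (⌊F⌋₊ : ℝ) := by rw [h1]; rfl
  have h0 : 0 ≤ Int.fract F := Int.fract_nonneg F
  rw [Nat.floor_eq_iff (by positivity)]
  have h3 := Int.floor_le (Int.fract F * 2 ^ n)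
  have h4 := Int.lt_floor_add_one (Int.fract F * 2 ^ n)
  rw [← h, h2] at h3 h4
  push_cast at h3 h4 ⊢
  constructor <;> linarith

def outlen (c : Nat.Partrec.Code) (k : ℕ) : ℕ := ((stg c k).map (fun q => q.2.length)).sum

theorem outlen_prim (c : Nat.Partrec.Code) : Primrec (outlen c) :=
  prim_sum.comp (Primrec.list_map (stg_prim c) (Primrec.list_length.comp (Primrec.snd.comp Primrec.snd)).to₂)

def trues (n : ℕ) : List Bool := (List.range n).map (fun _ => true)

theorem trues_prim : Primrec trues := Primrec.list_map Primrec.list_range (Primrec.const true).to₂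

def fnd {α : Type} (D : α → ℕ → Bool) (a : α) : Part ℕ := Nat.rfind (fun y => Part.some (D a y))

theorem fnd_partrec {α : Type} [Primcodable α] {D : α → ℕ → Bool} (hD : Computable₂ D) : Partrec (fnd D) := by
  have h : Partrec₂ (fun a y => Part.some (D a y)) := Computable.partrec hD
  exact Partrec.rfind h

theorem fnd_mem {α : Type} {D : α → ℕ → Bool} {a : α} {y : ℕ} (h : y ∈ fnd D a) : D a y = true := by
  have := (Nat.mem_rfind.1 h).1
  exact (Part.mem_some_iff.1 this).symm

theorem fnd_ex {α : Type} {D : α → ℕ → Bool} {a : α} (h : ∃ y, D a y = true) : ∃ y, y ∈ fnd D a := by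
  obtain ⟨y, hy⟩ := h
  apply Part.dom_iff_mem.1
  apply Nat.rfind_dom.2
  exact ⟨y, by rw [hy]; exact Part.mem_some _, fun _ => trivial⟩

def aB (I : ℕ) (s : List Bool) : ℕ × ℕ := (s.length, I * 2 ^ s.length + bval s + 1)

theorem aB_prim (I : ℕ) : Primrec (aB I) :=
  Primrec.list_length.pair (Primrec.succ.comp (Primrec.nat_add.comp (Primrec.nat_mul.comp (Primrec.const I) (prim_pow.comp (Primrec.const 2) Primrec.list_length)) bval_prim))

def dB (t : ℕ → ℕ) (c : Nat.Partrec.Code) (I : ℕ) (s : List Bool) (y : ℕ) : Bool := D1 t c (aB I s) y.unpair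

theorem dB_comp {t : ℕ → ℕ} (htc : Computable t) (c : Nat.Partrec.Code) (I : ℕ) : Computable₂ (dB t c I) :=
  (D1_comp htc c).comp ((aB_prim I).to_comp.comp Computable.fst) (Primrec.unpair.to_comp.comp Computable.snd)

def oB (c : Nat.Partrec.Code) (y : ℕ) : List Bool := trues (outlen c y.unpair.1 + 1)

theorem oB_comp (c : Nat.Partrec.Code) : Computable (oB c) :=
  (trues_prim.comp (Primrec.succ.comp ((outlen_prim c).comp (Primrec.fst.comp Primrec.unpair)))).to_comp

def fB (c : Nat.Partrec.Code) (t : ℕ → ℕ) (I : ℕ) (s : List Bool) : Part (List Bool) := (fnd (dB t c I) s).map (oB c)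

theorem fB_partrec (c : Nat.Partrec.Code) {t : ℕ → ℕ} (htc : Computable t) (I : ℕ) : Partrec (fB c t I) :=
  (fnd_partrec (dB_comp htc c I)).map ((oB_comp c).comp Computable.snd).to₂

def cB (U : Computer) (c : Nat.Partrec.Code) (t : ℕ → ℕ) (htc : Computable t) (I : ℕ) : Computer where
  f := fun p => (U.f p).bind (fB c t I)
  partrec := U.partrec.bind ((fB_partrec c htc I).comp Computable.snd).to₂
  prefixFree := by
    intro p hp q hq
    exact U.prefixFree p hp.1 q hq.1

theorem one_sub_phi (T : ℝ) (hT0 : 0 < T) (x : ℝ) (hx : 0 ≤ x) : 1 - phi T x ≤ x / T := by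
  have h : phi T x = Real.exp (-(Real.log 2 * (x / T))) := by
    rw [phi, Real.rpow_def_of_pos two_pos]; congr 1; ring
  have h1 := Real.add_one_le_exp (-(Real.log 2 * (x / T)))
  have h2 : Real.log 2 ≤ 1 := by linarith [Real.log_two_lt_d9]
  have h3 : 0 ≤ x / T := by positivity
  rw [h]
  nlinarith

theorem weak_random (U : Computer) (hU : IsOptimal U) (c : Nat.Partrec.Code) (hc : CodeFor U c) (T : ℝ) (hT0 : 0 < T) (hT1 : T ≤ 1)
    (t : ℕ → ℕ) (htc : Computable t) (ht : TApprox T t) (F : ℝ) (hF : 0 ≤ F) (hFZ : phi T F = ∑' p, zterm U T p) :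
    WeaklyChaitinRandom U T F := by
  obtain ⟨d, hd⟩ := hU (cB U c t htc ⌊F⌋₊)
  refine ⟨d - T * Real.logb 2 T, fun n _ => ?_⟩
  obtain ⟨p, hpl, hps⟩ := H_spec U hU (bits F n)
  set s := bits F n with hs
  have hsl : s.length = n := bits_length F n
  set a := ⌊F⌋₊ * 2 ^ s.length + bval s + 1 with ha
  have ha' : a = ⌊F * 2 ^ n⌋₊ + 1 := by rw [ha, hsl, floor_bits F hF n]
  have hFa : F < (a:ℝ) / 2 ^ s.length := by
    rw [lt_div_iff₀ (by positivity), ha', hsl]; push_cast; exact Nat.lt_floor_add_one _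
  have haF : (a:ℝ) / 2 ^ s.length ≤ F + 1 / 2 ^ n := by
    rw [hsl, ha', ← sub_le_iff_le_add, ← sub_div, div_le_iff₀ (by positivity)]
    push_cast
    have := Nat.floor_le (show 0 ≤ F * 2 ^ n by positivity)
    linarith
  have h3 : phi T ((a:ℝ) / 2 ^ s.length) < ∑' p, zterm U T p := by
    rw [← hFZ, phi_lt T hT0]; exact hFa
  obtain ⟨y0, hy0⟩ := D1_complete' hc hT0 hT1 ht h3
  obtain ⟨y, hy⟩ := fnd_ex (D := dB t c ⌊F⌋₊) (a := s) ⟨Nat.pair y0.1 y0.2, by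
    rw [dB, Nat.unpair_pair]; exact hy0⟩
  have hD0 : dB t c ⌊F⌋₊ s y = true := fnd_mem hy
  have hD : D1 t c (s.length, a) y.unpair = true := by rw [dB] at hD0; exact hD0
  have hw : trues (outlen c y.unpair.1 + 1) ∈ (cB U c t htc ⌊F⌋₊).f p := by
    refine Part.mem_bind hps ?_
    exact Part.mem_map _ hy
  obtain ⟨p', hp', hpo⟩ := hd p (Part.dom_iff_mem.2 ⟨_, hw⟩)
  have hup := hpo _ hw
  set k := y.unpair.1 with hk
  have hZk := D1_sound (k := y.unpair.1) (W := y.unpair.2) hc hT0 ht hD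
  rw [← hk] at hZk
  let P : U.domain := ⟨p', Part.dom_iff_mem.2 ⟨_, hup⟩⟩
  have hP : P ∉ SS U c k := by
    intro h
    rw [mem_SS] at h
    obtain ⟨s', hs'⟩ := h
    have e := Part.mem_unique (stg_sound hc hs') hup
    have : s'.length ≤ outlen c k := by
      apply List.le_sum_of_mem
      rw [List.mem_map]
      exact ⟨_, hs', rfl⟩
    rw [e] at this
    simp [trues] at this
  have hsum : zterm U T P + Zk U T c k ≤ ∑' p, zterm U T p := by
    classical
    rw [Zk, ← Finset.sum_insert hP]
    exact (zterm_summable U T hT0 hT1).sum_le_tsum _ (fun p _ => (zterm_pos U T p).le)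
  have h4 : phi T F * phi T (1 / 2 ^ n) ≤ Zk U T c k := by
    rw [← phi_add]
    refine le_trans ?_ hZk.le
    by_contra h
    rw [not_le, phi_lt T hT0] at h
    linarith
  have hZ1 := z_le_one U T hT0 hT1
  rw [← hFZ] at hsum hZ1
  have h5 := one_sub_phi T hT0 (1 / 2 ^ n) (by positivity)
  have h6 : zterm U T P ≤ 1 / 2 ^ n / T := by
    have := phi_pos T F
    have h7 : phi T F * (1 - phi T (1 / 2 ^ n)) ≤ 1 * (1 / 2 ^ n / T) := by
      apply mul_le_mul hZ1 h5 _ zero_le_one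
      have : phi T (1 / 2 ^ n) ≤ phi T 0 := by
        by_contra h
        rw [not_le, phi_lt T hT0] at h
        have : (0:ℝ) < 1 / 2 ^ n := by positivity
        linarith
      have e0 : phi T 0 = 1 := by simp [phi]
      linarith
    linarith
  have h8 : -(p'.length:ℝ) / T ≤ -n - Real.logb 2 T := by
    have := Real.logb_le_logb_of_le one_lt_two (zterm_pos U T P) h6
    rw [zterm, Real.logb_rpow two_pos (by norm_num), Real.logb_div (by positivity) hT0.ne', one_div, Real.logb_inv, Real.logb_pow, Real.logb_self_eq_one one_lt_two, mul_one] at this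
    exact this
  rw [div_le_iff₀ hT0] at h8
  have h9 : (p'.length:ℝ) ≤ p.length + d := by exact_mod_cast hp'
  rw [← hpl]
  nlinarith


def toB (n M : ℕ) : List Bool := (List.range n).map (fun i => decide (M / 2 ^ (n - 1 - i) % 2 = 1))

theorem toB_prim : Primrec₂ toB := by
  refine Primrec.list_map (Primrec.list_range.comp Primrec.fst) ?_
  have h : Primrec (fun z : (ℕ × ℕ) × ℕ => z.1.2 / 2 ^ (z.1.1 - 1 - z.2) % 2) := by
    refine Primrec.nat_mod.comp (Primrec.nat_div.comp (Primrec.snd.comp Primrec.fst) (prim_pow.comp (Primrec.const 2) ?_)) (Primrec.const 2)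
    exact Primrec.nat_sub.comp (Primrec.nat_sub.comp (Primrec.fst.comp Primrec.fst) (Primrec.const 1)) Primrec.snd
  exact PrimrecPred.decide (Primrec.eq.comp h (Primrec.const 1))

theorem toB_length (n M : ℕ) : (toB n M).length = n := by simp [toB]

theorem toB_succ (n M : ℕ) : toB (n + 1) M = toB n (M / 2) ++ [decide (M % 2 = 1)] := by
  unfold toB
  rw [List.range_succ, List.map_append]
  congr 1
  · apply List.map_congr_left
    intro i hi
    rw [List.mem_range] at hi
    have : n + 1 - 1 - i = (n - 1 - i) + 1 := by omega
    rw [this, pow_succ', Nat.div_div_eq_div_mul]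
  · simp

theorem bval_toB (n M : ℕ) : bval (toB n M) = M % 2 ^ n := by
  induction n generalizing M with
  | zero => simp [toB, bval, Nat.mod_one]
  | succ n ih =>
    rw [toB_succ, bval_append, ih, pow_succ', Nat.mod_mul]
    rcases Nat.mod_two_eq_zero_or_one M with h | h <;> simp [h]; omega

theorem bval_inj (n : ℕ) : ∀ s s' : List Bool, s.length = n → s'.length = n → bval s = bval s' → s = s' := by
  induction n with
  | zero => intro s s' h h' _; rw [List.length_eq_zero_iff] at h h'; rw [h, h']
  | succ n ih =>
    intro s s' h h' e
    rcases List.eq_nil_or_concat s with rfl | ⟨u, b, rfl⟩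
    · simp at h
    rcases List.eq_nil_or_concat s' with rfl | ⟨u', b', rfl⟩
    · simp at h'
    simp only [List.concat_eq_append] at *
    simp at h h'
    rw [bval_append, bval_append] at e
    have hb : b = b' := by
      cases b <;> cases b' <;> simp at e ⊢ <;> omega
    subst hb
    rw [ih u u' h h' (by omega)]

theorem bits_toB (F : ℝ) (hF : 0 ≤ F) (n : ℕ) : bits F n = toB n ⌊F * 2 ^ n⌋₊ := by
  apply bval_inj n _ _ (bits_length F n) (toB_length _ _)
  rw [bval_toB, floor_bits F hF n, Nat.mul_add_mod']
  rw [Nat.mod_eq_of_lt]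
  have h := bval_bits F n
  have h2 : ⌊Int.fract F * 2 ^ n⌋ < 2 ^ n := by
    rw [Int.floor_lt]
    have := Int.fract_lt_one F
    push_cast
    nlinarith [show (0:ℝ) < 2 ^ n by positivity]
  rw [← h] at h2
  exact_mod_cast h2

theorem bval_split (u v : List Bool) : bval (u ++ v) = bval u * 2 ^ v.length + bval v := by
  induction v using List.reverseRecOn with
  | nil => simp [bval]
  | append_singleton v b ih =>
    rw [← List.append_assoc, bval_append, bval_append, ih]
    simp [pow_succ]; ring

/-- stage search -/
def dO (c : Nat.Partrec.Code) (q : ℕ × ℕ) (k : ℕ) : Bool :=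
  decide (q.2 * 2 ^ (lens c k).sum < psum (lens c k) 1 2 (lens c k).sum * 2 ^ q.1)

theorem dO_comp (c : Nat.Partrec.Code) : Computable₂ (dO c) := by
  have hl : Primrec (fun z : (ℕ × ℕ) × ℕ => lens c z.2) := (lens_prim c).comp Primrec.snd
  have hs := prim_sum.comp hl
  have h2 : Primrec (fun z : (ℕ × ℕ) × ℕ => psum (lens c z.2) 1 2 (lens c z.2).sum) :=
    prim_psum.comp (hl.pair ((Primrec.const 1).pair ((Primrec.const 2).pair hs)))
  have : Primrec (fun z : (ℕ × ℕ) × ℕ => dO c z.1 z.2) := by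
    refine PrimrecPred.decide (Primrec.nat_lt.comp ?_ ?_)
    · exact Primrec.nat_mul.comp (Primrec.snd.comp Primrec.fst) (prim_pow.comp (Primrec.const 2) hs)
    · exact Primrec.nat_mul.comp h2 (prim_pow.comp (Primrec.const 2) (Primrec.fst.comp Primrec.fst))
  exact this.to_comp

noncomputable def Ok (U : Computer) (c : Nat.Partrec.Code) (k : ℕ) : ℝ := ∑ p ∈ SS U c k, oterm U p

theorem dO_iff {U : Computer} {c : Nat.Partrec.Code} (hc : CodeFor U c) (m N k : ℕ) :
    dO c (m, N) k = true ↔ (N:ℝ) < Ok U c k * 2 ^ m := by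
  have h1 := psum_real (lens c k) 1 2 (lens c k).sum (by norm_num) (fun x hx => mem_le_sum' _ x hx)
  have h2 := lens_sum hc k (fun l => ((1:ℝ)/2) ^ l)
  rw [dO, decide_eq_true_eq, ← Nat.cast_lt (α := ℝ)]
  simp only
  push_cast at h1 ⊢
  rw [h1, h2]
  unfold Ok oterm
  have hp : (0:ℝ) < 2 ^ (lens c k).sum := by positivity
  rw [mul_assoc, mul_comm ((2:ℝ) ^ (lens c k).sum) (2 ^ m), ← mul_assoc]
  exact mul_lt_mul_iff_left₀ hp

/-- approximate search of `F_k` -/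
def dA (t : ℕ → ℕ) (c : Nat.Partrec.Code) (q : ℕ × ℕ) (y : ℕ) : Bool :=
  D1 t c (q.1, y.unpair.1 + 1) (q.2, y.unpair.2.unpair.1) && D2 t c (q.1, y.unpair.1) (q.2, y.unpair.2.unpair.2)

theorem dA_comp {t : ℕ → ℕ} (htc : Computable t) (c : Nat.Partrec.Code) : Computable₂ (dA t c) := by
  have u1 : Primrec (fun x : ℕ => x.unpair.1) := Primrec.fst.comp Primrec.unpair
  have u2 : Primrec (fun x : ℕ => x.unpair.2) := Primrec.snd.comp Primrec.unpair
  have hn : Primrec (fun z : (ℕ × ℕ) × ℕ => z.1.1) := Primrec.fst.comp Primrec.fst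
  have hk : Primrec (fun z : (ℕ × ℕ) × ℕ => z.1.2) := Primrec.snd.comp Primrec.fst
  have ha : Primrec (fun z : (ℕ × ℕ) × ℕ => z.2.unpair.1) := u1.comp Primrec.snd
  have h1 : Primrec (fun z : (ℕ × ℕ) × ℕ => z.2.unpair.2.unpair.1) := u1.comp (u2.comp Primrec.snd)
  have h2 : Primrec (fun z : (ℕ × ℕ) × ℕ => z.2.unpair.2.unpair.2) := u2.comp (u2.comp Primrec.snd)
  have A : Computable (fun z : (ℕ × ℕ) × ℕ => D1 t c (z.1.1, z.2.unpair.1 + 1) (z.1.2, z.2.unpair.2.unpair.1)) :=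
    (D1_comp htc c).comp (hn.pair (Primrec.succ.comp ha)).to_comp (hk.pair h1).to_comp
  have B : Computable (fun z : (ℕ × ℕ) × ℕ => D2 t c (z.1.1, z.2.unpair.1) (z.1.2, z.2.unpair.2.unpair.2)) :=
    (D2_comp htc c).comp (hn.pair ha).to_comp (hk.pair h2).to_comp
  exact Primrec.and.to_comp.comp A B

theorem dA_sound {U : Computer} {c : Nat.Partrec.Code} (hc : CodeFor U c) {T : ℝ} (hT0 : 0 < T) {t : ℕ → ℕ} (ht : TApprox T t)
    {n k y : ℕ} {G : ℝ} (hG : phi T G = Zk U T c k) (h : dA t c (n, k) y = true) :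
    G * 2 ^ n < y.unpair.1 + 1 ∧ (y.unpair.1 : ℝ) < G * 2 ^ n + 1 := by
  rw [dA, Bool.and_eq_true] at h
  have h1 := D1_sound hc hT0 ht h.1
  have h2 := D2_sound hc hT0 ht h.2
  rw [← hG, phi_lt T hT0, lt_div_iff₀ (by positivity)] at h1
  rw [← hG, ← phi_add, phi_lt T hT0, div_lt_iff₀ (by positivity), add_mul, one_div, inv_mul_cancel₀ (by positivity)] at h2
  push_cast at h1
  constructor <;> linarith

theorem dA_complete {U : Computer} {c : Nat.Partrec.Code} (hc : CodeFor U c) {T : ℝ} (hT0 : 0 < T) {t : ℕ → ℕ} (ht : TApprox T t)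
    {n k : ℕ} {G : ℝ} (hG0 : 0 ≤ G) (hG : phi T G = Zk U T c k) : ∃ y, dA t c (n, k) y = true := by
  have h1 : phi T (((⌊G * 2 ^ n⌋₊ + 1 : ℕ) : ℝ) / 2 ^ n) < Zk U T c k := by
    rw [← hG, phi_lt T hT0, lt_div_iff₀ (by positivity)]; push_cast; exact Nat.lt_floor_add_one _
  have h2 : phi T (1 / 2 ^ n) * Zk U T c k < phi T ((⌊G * 2 ^ n⌋₊ : ℝ) / 2 ^ n) := by
    rw [← hG, ← phi_add, phi_lt T hT0, div_lt_iff₀ (by positivity), add_mul, one_div, inv_mul_cancel₀ (by positivity)]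
    have := Nat.floor_le (show 0 ≤ G * 2 ^ n by positivity)
    linarith
  obtain ⟨W1, hW1⟩ := D1_complete hc hT0 ht h1
  obtain ⟨W2, hW2⟩ := D2_complete hc hT0 ht h2
  refine ⟨Nat.pair ⌊G * 2 ^ n⌋₊ (Nat.pair W1 W2), ?_⟩
  rw [dA, Bool.and_eq_true]
  simp only [Nat.unpair_pair]
  exact ⟨hW1, hW2⟩


def jof (p : List Bool) : ℕ := p.findIdx (fun b => !b)

theorem jof_prim : Primrec jof :=
  Primrec.list_findIdx (f := fun p : List Bool => p) (p := fun _ b => !b) Primrec.id (Primrec.not.comp Primrec.snd).to₂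

/-- the parameters `(m, N)` coded by a program -/
def mnof (K : ℕ) (p : List Bool) : ℕ × ℕ := (K * jof p, bval p % 2 ^ (K * jof p))

theorem mnof_prim (K : ℕ) : Primrec (mnof K) := by
  have h : Primrec (fun p => K * jof p) := Primrec.nat_mul.comp (Primrec.const K) jof_prim
  exact h.pair (Primrec.nat_mod.comp bval_prim (prim_pow.comp (Primrec.const 2) h))

def nof (B r : ℕ) (p : List Bool) : ℕ := B * jof p - r

theorem nof_prim (B r : ℕ) : Primrec (nof B r) :=
  Primrec.nat_sub.comp (Primrec.nat_mul.comp (Primrec.const B) jof_prim) (Primrec.const r)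

def gC (t : ℕ → ℕ) (c : Nat.Partrec.Code) (B r e : ℕ) (p : List Bool) (k : ℕ) : Part (List Bool) :=
  (fnd (dA t c) (nof B r p, k)).map (fun y => toB (nof B r p) (y.unpair.1 - e))

theorem gC_partrec {t : ℕ → ℕ} (htc : Computable t) (c : Nat.Partrec.Code) (B r e : ℕ) : Partrec₂ (gC t c B r e) := by
  have h1 : Partrec (fun z : List Bool × ℕ => fnd (dA t c) (nof B r z.1, z.2)) :=
    (fnd_partrec (dA_comp htc c)).comp (((nof_prim B r).comp Primrec.fst).pair Primrec.snd).to_comp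
  refine Partrec.map h1 (g := fun z y => toB (nof B r z.1) (y.unpair.1 - e)) ?_
  have h2 : Primrec (fun z : (List Bool × ℕ) × ℕ => toB (nof B r z.1.1) (z.2.unpair.1 - e)) :=
    toB_prim.comp ((nof_prim B r).comp (Primrec.fst.comp Primrec.fst))
      (Primrec.nat_sub.comp (Primrec.fst.comp (Primrec.unpair.comp Primrec.snd)) (Primrec.const e))
  exact h2.to_comp

def fC (t : ℕ → ℕ) (c : Nat.Partrec.Code) (B r e K : ℕ) (p : List Bool) : Part (List Bool) :=
  (fnd (dO c) (mnof K p)).bind (gC t c B r e p)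

theorem fC_partrec {t : ℕ → ℕ} (htc : Computable t) (c : Nat.Partrec.Code) (B r e K : ℕ) : Partrec (fC t c B r e K) :=
  ((fnd_partrec (dO_comp c)).comp (mnof_prim K).to_comp).bind (gC_partrec htc c B r e)

def okp (K : ℕ) (p : List Bool) : Bool := decide (p.length = (K + 1) * jof p + 1)

theorem okp_prim (K : ℕ) : Primrec (okp K) :=
  PrimrecPred.decide (Primrec.eq.comp Primrec.list_length (Primrec.succ.comp (Primrec.nat_mul.comp (Primrec.const (K+1)) jof_prim)))

theorem okp_pf (K : ℕ) (p q : List Bool) (hp : okp K p = true) (hq : okp K q = true) (h : p <+: q) : p = q := by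
  simp only [okp, decide_eq_true_eq] at hp hq
  obtain ⟨v, rfl⟩ := h
  have hlt : jof p < p.length := by
    rw [hp]; nlinarith
  have : jof (p ++ v) = jof p := by
    unfold jof at hlt ⊢
    rw [List.findIdx_append, if_pos]
    exact hlt
  rw [this, List.length_append] at hq
  have : v = [] := List.length_eq_zero_iff.1 (by omega)
  simp [this]

def cC (t : ℕ → ℕ) (htc : Computable t) (c : Nat.Partrec.Code) (B r e K : ℕ) : Computer where
  f := fun p => cond (okp K p) (fC t c B r e K p) Part.none
  partrec := Partrec.cond (okp_prim K).to_comp (fC_partrec htc c B r e K) Partrec.none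
  prefixFree := by
    have key : ∀ p, (cond (okp K p) (fC t c B r e K p) Part.none).Dom → okp K p = true := by
      intro p hp
      by_contra h
      rw [Bool.not_eq_true] at h
      rw [h] at hp
      exact hp
    intro p hp q hq h
    exact okp_pf K p q (key p hp) (key q hq) h

theorem jof_prog (j : ℕ) (v : List Bool) : jof (trues j ++ false :: v) = j := by
  unfold jof
  rw [List.findIdx_append, if_neg]
  · simp [trues, List.findIdx_cons]
  · rw [List.findIdx_lt_length]; simp [trues]

theorem Ok_tendsto {U : Computer} {c : Nat.Partrec.Code} (hc : CodeFor U c) :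
    Tendsto (Ok U c) atTop (nhds (∑' p, oterm U p)) :=
  ((oterm_summable U).hasSum).comp (SS_tendsto hc)

theorem oterm_pos (U : Computer) (p) : 0 < oterm U p := by unfold oterm; positivity

theorem tail_bound {U : Computer} {c : Nat.Partrec.Code} {T : ℝ} (hT0 : 0 < T) (hT1 : T ≤ 1)
    (m k : ℕ) (h : ∑' p, oterm U p - Ok U c k < 1 / 2 ^ m) :
    ∑' p, zterm U T p - Zk U T c k ≤ (2:ℝ) ^ (-(m:ℝ) / T) := by
  have hO := (oterm_summable U).sum_add_tsum_subtype_compl (SS U c k)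
  have hZ := (zterm_summable U T hT0 hT1).sum_add_tsum_subtype_compl (SS U c k)
  have hOs : Summable (fun x : {x // x ∉ SS U c k} => oterm U x) := (oterm_summable U).subtype _
  have hZs : Summable (fun x : {x // x ∉ SS U c k} => zterm U T x) := (zterm_summable U T hT0 hT1).subtype _
  set θ : ℝ := (2:ℝ) ^ (-(m:ℝ) * (1 / T - 1)) with hθ
  have hθ0 : 0 < θ := Real.rpow_pos_of_pos two_pos _
  have e2 : (1:ℝ) / 2 ^ m = (2:ℝ) ^ (-(m:ℝ)) := by rw [Real.rpow_neg two_pos.le, Real.rpow_natCast, one_div]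
  have key : ∀ x : {x // x ∉ SS U c k}, zterm U T x ≤ θ * oterm U x := by
    intro x
    have h1 : oterm U x ≤ ∑' x : {x // x ∉ SS U c k}, oterm U x :=
      hOs.le_tsum x (fun y _ => (oterm_pos U y).le)
    have h2 : oterm U x < 1 / 2 ^ m := by
      unfold Ok at h; linarith
    rw [e2, oterm_rpow, Real.rpow_lt_rpow_left_iff one_lt_two, neg_lt_neg_iff] at h2
    rw [oterm_rpow, zterm, hθ, ← Real.rpow_add two_pos]
    apply Real.rpow_le_rpow_of_exponent_le one_le_two
    have h3 : 0 ≤ 1 / T - 1 := by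
      rw [sub_nonneg, le_div_iff₀ hT0]; linarith
    have e : -((x.1.1.length : ℕ):ℝ) / T = -((x.1.1.length : ℕ):ℝ) * (1 / T - 1) + -((x.1.1.length : ℕ):ℝ) := by ring
    rw [e]
    nlinarith
  have h4 := hZs.tsum_le_tsum key (hOs.mul_left θ)
  rw [tsum_mul_left] at h4
  have e3 : (2:ℝ) ^ (-(m:ℝ) / T) = θ * (1 / 2 ^ m) := by
    rw [e2, hθ, ← Real.rpow_add two_pos]; congr 1; ring
  rw [e3]
  have h5 : θ * ∑' x : {x // x ∉ SS U c k}, oterm U x ≤ θ * (1 / 2 ^ m) := by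
    apply mul_le_mul_of_nonneg_left _ hθ0.le
    unfold Ok at h; linarith
  unfold Zk
  linarith

theorem G_bound {T Z z δ : ℝ} (hT0 : 0 < T) (hT1 : T ≤ 1) (hZ : 0 < Z) (hz : z ≤ Z) (hzδ : Z - z ≤ δ) (hδ : δ ≤ Z / 2) :
    -T * Real.logb 2 z ≤ -T * Real.logb 2 Z + 4 / Z * δ := by
  have hz0 : 0 < z := by linarith
  have h1 : Real.log (Z / z) ≤ Z / z - 1 := Real.log_le_sub_one_of_pos (by positivity)
  have h2 : Z / z - 1 ≤ 2 / Z * δ := by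
    rw [div_sub_one hz0.ne', div_mul_eq_mul_div, div_le_div_iff₀ hz0 hZ]
    nlinarith
  have h3 : Real.logb 2 Z - Real.logb 2 z = Real.log (Z / z) / Real.log 2 := by
    rw [← Real.logb_div hZ.ne' hz0.ne']; rfl
  have hl : 1 / 2 < Real.log 2 := by linarith [Real.log_two_gt_d9]
  have h0 : 0 ≤ Real.log (Z / z) := Real.log_nonneg (by rw [le_div_iff₀ hz0]; linarith)
  have h4 : Real.log (Z / z) / Real.log 2 ≤ 2 * Real.log (Z / z) := by
    rw [div_le_iff₀ (by linarith)]; nlinarith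
  have h5 : 0 ≤ Real.log (Z / z) / Real.log 2 := by positivity
  have e : 4 / Z * δ = 2 * (2 / Z * δ) := by ring
  rw [e]
  nlinarith

theorem trues_length (j : ℕ) : (trues j).length = j := by simp [trues]


theorem compress_core (U : Computer) (hU : IsOptimal U) (c : Nat.Partrec.Code) (hc : CodeFor U c) (T : ℝ) (hT0 : 0 < T) (hT1 : T ≤ 1)
    (t : ℕ → ℕ) (htc : Computable t) (ht : TApprox T t) (F : ℝ) (hF : 0 ≤ F) (hF' : F = -T * Real.logb 2 (∑' p, zterm U T p))
    (B : ℕ) (hB : 1 ≤ B) :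
    ∃ d n0 : ℕ, ∀ n ≥ n0, H U (bits F n) ≤ (⌈T * B⌉₊ + 1) * ((n + B - 1) / B) + 1 + d := by
  set K := ⌈T * B⌉₊ with hK
  set Z := ∑' p, zterm U T p with hZdef
  set Om := ∑' p, oterm U p with hOm
  have hZ : 0 < Z := z_pos U hU T hT0 hT1
  have hZO : Z ≤ Om := (zterm_summable U T hT0 hT1).tsum_le_tsum (zterm_le U T hT0 hT1) (oterm_summable U)
  have hO0 : 0 < Om := hZ.trans_le hZO
  have hO1 : Om ≤ 1 := oterm_tsum_le U
  choose D hD using fun r e => hU (cC t htc c B r e K)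
  set E := ⌈4 / Z⌉₊ + 2 with hE
  obtain ⟨n0, hn0⟩ := exists_pow_lt_of_lt_one (show 0 < Z / 2 by positivity) (show (1/2:ℝ) < 1 by norm_num)
  refine ⟨∑ r ∈ Finset.range B, ∑ e ∈ Finset.range (E + 1), D r e, n0, fun n hn => ?_⟩
  set j := (n + B - 1) / B with hj
  have hj1 : n ≤ B * j := by
    have h1 := Nat.div_add_mod (n + B - 1) B
    have h2 := Nat.mod_lt (n + B - 1) (show B > 0 by omega)
    rw [← hj] at h1
    omega
  have hj2 : B * j < n + B := by
    have h1 := Nat.div_add_mod (n + B - 1) B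
    rw [← hj] at h1
    omega
  set m := K * j with hm
  -- the number coded
  obtain ⟨N, hN1, hN2, hN3⟩ : ∃ N : ℕ, (N:ℝ) < Om * 2 ^ m ∧ Om * 2 ^ m ≤ N + 1 ∧ N < 2 ^ m := by
    have hpos : 0 < Om * 2 ^ m := by positivity
    have h1 : 0 < ⌈Om * 2 ^ m⌉₊ := Nat.ceil_pos.2 hpos
    have h2 := Nat.ceil_lt_add_one hpos.le
    have h3 := Nat.le_ceil (Om * 2 ^ m)
    have e : ((⌈Om * 2 ^ m⌉₊ - 1 : ℕ) : ℝ) = (⌈Om * 2 ^ m⌉₊ : ℝ) - 1 := by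
      rw [Nat.cast_sub h1]; simp
    refine ⟨⌈Om * 2 ^ m⌉₊ - 1, by rw [e]; linarith, by rw [e]; linarith, ?_⟩
    have : ((⌈Om * 2 ^ m⌉₊ - 1 : ℕ) : ℝ) < (2:ℝ) ^ m := by
      rw [e]
      have h4 : (0:ℝ) < 2 ^ m := by positivity
      nlinarith
    exact_mod_cast this
  set p := trues j ++ false :: toB m N with hp
  have hpj : jof p = j := jof_prog j _
  have hpl : p.length = (K + 1) * j + 1 := by
    rw [hp, List.length_append, trues_length, List.length_cons, toB_length, hm]; ring
  have hok : okp K p = true := by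
    rw [okp, decide_eq_true_eq, hpj, hpl]
  have hmn : mnof K p = (m, N) := by
    rw [mnof, hpj, ← hm]
    have : p = (trues j ++ [false]) ++ toB m N := by rw [hp]; simp
    rw [this, bval_split, toB_length, Nat.mul_add_mod', bval_toB, Nat.mod_mod, Nat.mod_eq_of_lt hN3]
  -- stage
  have hk0 : ∃ k, dO c (m, N) k = true := by
    have : Tendsto (fun k => Ok U c k * 2 ^ m) atTop (nhds (Om * 2 ^ m)) := (Ok_tendsto hc).mul_const _
    obtain ⟨k, hk⟩ := (this.eventually (lt_mem_nhds hN1)).exists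
    exact ⟨k, (dO_iff hc m N k).2 hk⟩
  obtain ⟨k, hk⟩ := fnd_ex hk0
  have hkO := (dO_iff hc m N k).1 (fnd_mem hk)
  have hgap : Om - Ok U c k < 1 / 2 ^ m := by
    rw [lt_div_iff₀ (by positivity)]; linarith
  have htail := tail_bound (T := T) hT0 hT1 m k hgap
  rw [← hZdef] at htail
  have hδ : (2:ℝ) ^ (-(m:ℝ) / T) ≤ (1/2) ^ n := by
    have e : ((1:ℝ)/2) ^ n = (2:ℝ) ^ (-(n:ℝ)) := by rw [Real.rpow_neg two_pos.le, Real.rpow_natCast]; simp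
    rw [e]
    apply Real.rpow_le_rpow_of_exponent_le one_le_two
    rw [neg_div, neg_le_neg_iff, le_div_iff₀ hT0]
    have h1 : T * B ≤ K := Nat.le_ceil _
    have h2 : (n:ℝ) ≤ B * j := by exact_mod_cast hj1
    rw [hm]; push_cast
    have h3 : (0:ℝ) ≤ j := by positivity
    nlinarith
  have hδ2 : ((1:ℝ)/2) ^ n ≤ Z / 2 :=
    (pow_le_pow_of_le_one (by norm_num) (by norm_num) hn).trans hn0.le
  have hzk := Zk_le (U := U) (c := c) hT0 hT1 k
  rw [← hZdef] at hzk
  have hzk0 : 0 < Zk U T c k := by linarith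
  set G := -T * Real.logb 2 (Zk U T c k) with hG
  have hGphi : phi T G = Zk U T c k := phi_log T hT0 _ hzk0
  have hFphi : phi T F = Z := by rw [hF']; exact phi_log T hT0 _ hZ
  have hFG : F ≤ G := by
    by_contra h
    rw [not_le, ← phi_lt T hT0, hGphi, hFphi] at h
    linarith
  have hGF : G ≤ F + 4 / Z * (1/2) ^ n := by
    rw [hF']
    exact G_bound hT0 hT1 hZ hzk (htail.trans hδ) hδ2
  obtain ⟨y, hy⟩ := fnd_ex (dA_complete (n := n) hc hT0 ht (hF.trans hFG) hGphi)
  obtain ⟨ha1, ha2⟩ := dA_sound hc hT0 ht hGphi (fnd_mem hy)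
  set a := y.unpair.1 with ha
  have h2n : (0:ℝ) < 2 ^ n := by positivity
  have e12 : ((1:ℝ)/2) ^ n * 2 ^ n = 1 := by rw [← mul_pow]; norm_num
  have hlow : ⌊F * 2 ^ n⌋₊ ≤ a := by
    have h1 : (⌊F * 2 ^ n⌋₊ : ℝ) ≤ F * 2 ^ n := Nat.floor_le (by positivity)
    have h2 : F * 2 ^ n ≤ G * 2 ^ n := by gcongr
    have : (⌊F * 2 ^ n⌋₊ : ℝ) < a + 1 := by linarith
    have : ⌊F * 2 ^ n⌋₊ < a + 1 := by exact_mod_cast this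
    omega
  have hup : a - ⌊F * 2 ^ n⌋₊ < E + 1 := by
    have h1 := Nat.lt_floor_add_one (F * 2 ^ n)
    have h2 : G * 2 ^ n ≤ F * 2 ^ n + 4 / Z := by
      have := mul_le_mul_of_nonneg_right hGF h2n.le
      rw [add_mul, mul_assoc (4 / Z), e12, mul_one] at this
      exact this
    have h3 := Nat.le_ceil (4 / Z)
    have : (a:ℝ) < ⌊F * 2 ^ n⌋₊ + ⌈4 / Z⌉₊ + 2 := by linarith
    have : a < ⌊F * 2 ^ n⌋₊ + ⌈4 / Z⌉₊ + 2 := by exact_mod_cast this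
    omega
  set e := a - ⌊F * 2 ^ n⌋₊ with he
  set r := B * j - n with hr
  have hnof : nof B r p = n := by rw [nof, hpj]; omega
  have hmem : bits F n ∈ (cC t htc c B r e K).f p := by
    have e1 : (cC t htc c B r e K).f p = fC t c B r e K p := by
      change cond (okp K p) (fC t c B r e K p) Part.none = _
      rw [hok]; rfl
    rw [e1, fC]
    refine Part.mem_bind (a := k) (by rw [hmn]; exact hk) ?_
    rw [gC, hnof]
    have e2 : bits F n = toB n (y.unpair.1 - e) := by
      rw [bits_toB F hF n, ← ha]
      congr 1
      omega
    rw [e2]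
    exact Part.mem_map (fun y : ℕ => toB n (y.unpair.1 - e)) hy
  obtain ⟨p', hp', hpo⟩ := hD r e p (Part.dom_iff_mem.2 ⟨_, hmem⟩)
  have hH := H_le U _ p' (hpo _ hmem)
  have hsum : D r e ≤ ∑ r ∈ Finset.range B, ∑ e ∈ Finset.range (E + 1), D r e := by
    have h1 : D r e ≤ ∑ e ∈ Finset.range (E + 1), D r e :=
      Finset.single_le_sum (f := fun e => D r e) (fun _ _ => Nat.zero_le _) (Finset.mem_range.2 hup)
    have h2 : ∑ e ∈ Finset.range (E + 1), D r e ≤ ∑ r ∈ Finset.range B, ∑ e ∈ Finset.range (E + 1), D r e :=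
      Finset.single_le_sum (f := fun r => ∑ e ∈ Finset.range (E + 1), D r e) (fun _ _ => Nat.zero_le _) (Finset.mem_range.2 (by omega))
    exact h1.trans h2
  omega

theorem compress (U : Computer) (hU : IsOptimal U) (c : Nat.Partrec.Code) (hc : CodeFor U c) (T : ℝ) (hT0 : 0 < T) (hT1 : T ≤ 1)
    (t : ℕ → ℕ) (htc : Computable t) (ht : TApprox T t) (F : ℝ) (hF : 0 ≤ F) (hF' : F = -T * Real.logb 2 (∑' p, zterm U T p)) :
    DCompressible U T F := by
  unfold DCompressible
  apply le_of_forall_pos_le_add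
  intro ε hε
  obtain ⟨B, hB⟩ := exists_nat_gt (4 / ε)
  have hB0 : (0:ℝ) < B := lt_trans (by positivity) hB
  have hB1 : 1 ≤ B := by exact_mod_cast hB0
  obtain ⟨d, n0, h⟩ := compress_core U hU c hc T hT0 hT1 t htc ht F hF hF' B hB1
  set K := ⌈T * B⌉₊ with hK
  obtain ⟨n1, hn1⟩ := exists_nat_gt ((K + 1 + 1 + d) / (ε / 2))
  apply limsup_le_of_le
  · refine IsCoboundedUnder.of_frequently_ge (a := 0) ?_
    exact Frequently.of_forall (fun n => by positivity)
  · filter_upwards [eventually_ge_atTop n0, eventually_ge_atTop n1, eventually_ge_atTop 1] with n h0 h1 h2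
    have hn := h n h0
    have hnpos : (0:ℝ) < n := by exact_mod_cast h2
    rw [div_le_iff₀ hnpos]
    set j := (n + B - 1) / B with hj
    have hj2 : B * j < n + B := by
      have h1 := Nat.div_add_mod (n + B - 1) B
      rw [← hj] at h1
      omega
    have hj3 : (B:ℝ) * j ≤ n + B := by exact_mod_cast hj2.le
    have hK1 : (K:ℝ) < T * B + 1 := Nat.ceil_lt_add_one (by positivity)
    have hn' : (H U (bits F n) : ℝ) ≤ (K + 1) * j + 1 + d := by exact_mod_cast hn
    have hj4 : (j:ℝ) ≤ n / B + 1 := by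
      rw [div_add_one hB0.ne', le_div_iff₀ hB0]; linarith
    have h5 : ((K:ℝ) + 1) * j ≤ (K + 1) * (n / B + 1) := by gcongr
    have h6 : ((K:ℝ) + 1) / B ≤ T + ε / 2 := by
      rw [div_le_iff₀ hB0]
      rw [div_lt_iff₀ hε] at hB
      nlinarith
    have h7 : ((K:ℝ) + 1) * (n / B) ≤ (T + ε / 2) * n := by
      have : ((K:ℝ) + 1) * (n / B) = ((K:ℝ) + 1) / B * n := by ring
      rw [this]; gcongr
    have h8 : (K + 1 + 1 + d : ℝ) ≤ ε / 2 * n := by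
      rw [div_lt_iff₀ (by positivity)] at hn1
      have : (n1:ℝ) ≤ n := by exact_mod_cast h1
      nlinarith
    linarith

theorem freeEnergy_random_compressible (U : Computer) (hU : IsOptimal U)
    (T : ℝ) (hT0 : 0 < T) (hT1 : T ≤ 1) (hTc : ComputableReal T) :
    Summable (zterm U T) ∧
    0 < ∑' p, zterm U T p ∧
    RightComputable (-T * Real.logb 2 (∑' p, zterm U T p)) ∧
    WeaklyChaitinRandom U T (-T * Real.logb 2 (∑' p, zterm U T p)) ∧
    DCompressible U T (-T * Real.logb 2 (∑' p, zterm U T p)) := by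
  have hZ := z_pos U hU T hT0 hT1
  have hZ1 := z_le_one U T hT0 hT1
  obtain ⟨f, hf, hfT⟩ := hTc
  obtain ⟨t, htc, ht⟩ := tfun_exists T hT0 f hf hfT
  obtain ⟨c, hc⟩ := exists_codeFor U
  have hF : 0 ≤ -T * Real.logb 2 (∑' p, zterm U T p) := by
    have := Real.logb_nonpos one_lt_two hZ.le hZ1
    nlinarith
  have hphi := phi_log T hT0 _ hZ
  exact ⟨zterm_summable U T hT0 hT1, hZ,
    right_comp U c hc T hT0 hT1 t htc ht _ hF hphi,
    weak_random U hU c hc T hT0 hT1 t htc ht _ hF hphi,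
    compress U hU c hc T hT0 hT1 t htc ht _ hF rfl⟩
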